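/- There exists a constant C > 0, depending only on α and β, with the following property. Let (u_k, λ_k, f_k) be a sequence of real Dirichlet quasimode data on the stadium S with ‖u_k‖_{L²(S)} = 1 for all k, λ_k → ∞, and λ_k² ‖f_k‖_{L²(S)} → 0 (an o(λ^{−2}) quasimode; in particular this holds for a sequence of Dirichlet eigenfunctions, for which f_k = 0). Then for all sufficiently large k, ‖u_k‖_{L²(W)} ≥ C λ_k^{−2}, where ‖u_k‖_{L²(W)} is the L² norm of u_k over the wings W. -/

import Mathlib

open MeasureTheory Real Set Filter

noncomputable section

/-- Partial derivative in the first (x) variable. -/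
def pdx (u : ℝ × ℝ → ℝ) (p : ℝ × ℝ) : ℝ := deriv (fun t => u (t, p.2)) p.1

/-- Partial derivative in the second (y) variable. -/
def pdy (u : ℝ × ℝ → ℝ) (p : ℝ × ℝ) : ℝ := deriv (fun t => u (p.1, t)) p.2

/-- The positive Laplacian `Δu = -u_xx - u_yy`. -/
def lap (u : ℝ × ℝ → ℝ) (p : ℝ × ℝ) : ℝ := -(pdx (pdx u) p) - (pdy (pdy u) p)

/-- The central rectangle `R = [-α,α] × [-β,β]`. -/
def Rect (α β : ℝ) : Set (ℝ × ℝ) := Icc (-α) α ×ˢ Icc (-β) β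

/-- The wings `W = W₊ ∪ W₋`, two half-discs of radius β centered at `(±α, 0)`. -/
def Wings (α β : ℝ) : Set (ℝ × ℝ) :=
  {p | (p.1 - α) ^ 2 + p.2 ^ 2 ≤ β ^ 2 ∧ α ≤ p.1} ∪
  {p | (p.1 + α) ^ 2 + p.2 ^ 2 ≤ β ^ 2 ∧ p.1 ≤ -α}

/-- The Bunimovich stadium `S = R ∪ W`. -/
def Stadium (α β : ℝ) : Set (ℝ × ℝ) := Rect α β ∪ Wings α β

/-- The boundary `∂S`: two horizontal segments and two semicircles. -/
def StadiumBoundary (α β : ℝ) : Set (ℝ × ℝ) :=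
  {p | |p.1| ≤ α ∧ (p.2 = β ∨ p.2 = -β)} ∪
  {p | (|p.1| - α) ^ 2 + p.2 ^ 2 = β ^ 2 ∧ α ≤ |p.1|}

/-- Boundary integral `∫_{∂S} g dl` of an integrand `g` depending on the boundary point
and the outward unit normal at that point. -/
def bdryInt (α β : ℝ) (g : ℝ × ℝ → ℝ × ℝ → ℝ) : ℝ :=
  (∫ x in (-α)..α, (g (x, β) (0, 1) + g (x, -β) (0, -1))) +
  β * ∫ θ in (-(π / 2))..(π / 2),
    (g (α + β * cos θ, β * sin θ) (cos θ, sin θ) +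
     g (-(α + β * cos θ), β * sin θ) (-cos θ, sin θ))

/-- Boundary integral `∫_{∂S ∩ W} g dl` over the two semicircles only. -/
def bdryIntW (α β : ℝ) (g : ℝ × ℝ → ℝ × ℝ → ℝ) : ℝ :=
  β * ∫ θ in (-(π / 2))..(π / 2),
    (g (α + β * cos θ, β * sin θ) (cos θ, sin θ) +
     g (-(α + β * cos θ), β * sin θ) (-cos θ, sin θ))

/-- The normal derivative `∂_N u = n₁ ∂_x u + n₂ ∂_y u` at a boundary point `p`
with outward unit normal `n`. -/
def nderiv (u : ℝ × ℝ → ℝ) (p n : ℝ × ℝ) : ℝ := n.1 * pdx u p + n.2 * pdy u p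

/-- A real Dirichlet quasimode datum `(u, λ, f)` on the stadium: `λ > 0`, `u` smooth on a
neighborhood of `S`, `u = 0` on `∂S`, and `(Δ - λ²) u = f` on `S`. -/
structure QMDatum (α β : ℝ) where
  u : ℝ × ℝ → ℝ
  lam : ℝ
  f : ℝ × ℝ → ℝ
  lam_pos : 0 < lam
  smooth : ∃ V : Set (ℝ × ℝ), IsOpen V ∧ Stadium α β ⊆ V ∧ ContDiffOn ℝ (⊤ : ℕ∞) u V
  dirichlet : ∀ p ∈ StadiumBoundary α β, u p = 0
  eqn : ∀ p ∈ Stadium α β, lap u p - lam ^ 2 * u p = f p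


/-- Half region. -/
def DD (α β c : ℝ) : Set (ℝ × ℝ) :=
  {p | c ≤ p.1 ∧ -β ≤ p.2 ∧ p.2 ≤ β ∧ p.1 ≤ α + √(β ^ 2 - p.2 ^ 2)}

lemma DD_isCompact (α β c : ℝ) : IsCompact (DD α β c) := by
  refine Metric.isCompact_of_isClosed_isBounded ?_ ?_
  · have h1 : IsClosed {p : ℝ × ℝ | c ≤ p.1} := isClosed_le (by fun_prop) (by fun_prop)
    have h2 : IsClosed {p : ℝ × ℝ | -β ≤ p.2} := isClosed_le (by fun_prop) (by fun_prop)
    have h3 : IsClosed {p : ℝ × ℝ | p.2 ≤ β} := isClosed_le (by fun_prop) (by fun_prop)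
    have h4 : IsClosed {p : ℝ × ℝ | p.1 ≤ α + √(β ^ 2 - p.2 ^ 2)} :=
      isClosed_le (by fun_prop) (by fun_prop)
    exact h1.inter (h2.inter (h3.inter h4))
  · refine (Metric.isBounded_Icc ((c, -β) : ℝ × ℝ) (α + |β|, β)).subset ?_
    rintro ⟨x, y⟩ ⟨h1, h2, h3, h4⟩
    simp only at h1 h2 h3 h4
    have : √(β ^ 2 - y ^ 2) ≤ |β| := by
      rw [← Real.sqrt_sq_eq_abs]
      exact Real.sqrt_le_sqrt (by nlinarith [sq_nonneg y])
    exact ⟨⟨h1, h2⟩, ⟨by simp only; linarith, h3⟩⟩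

lemma slice_gen (D : Set (ℝ × ℝ)) (hD : IsCompact D) (F : ℝ × ℝ → ℝ) (hF : Continuous F)
    (a b : ℝ) (hab : a ≤ b) (l r : ℝ → ℝ) (hlr : ∀ x ∈ Icc a b, l x ≤ r x)
    (hmem : ∀ x y, (x, y) ∈ D ↔ x ∈ Icc a b ∧ y ∈ Icc (l x) (r x)) :
    ∫ p in D, F p = ∫ x in a..b, ∫ y in (l x)..(r x), F (x, y) := by
  have hint : IntegrableOn F D := hF.continuousOn.integrableOn_compact hD
  rw [← integral_indicator hD.measurableSet, Measure.volume_eq_prod, integral_prod]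
  · rw [intervalIntegral.integral_of_le hab, ← integral_Icc_eq_integral_Ioc,
      ← integral_indicator measurableSet_Icc]
    congr 1
    ext x
    by_cases hx : x ∈ Icc a b
    · rw [indicator_of_mem hx, intervalIntegral.integral_of_le (hlr x hx),
        ← integral_Icc_eq_integral_Ioc, ← integral_indicator measurableSet_Icc]
      congr 1
      ext y
      by_cases hy : y ∈ Icc (l x) (r x)
      · rw [indicator_of_mem hy, indicator_of_mem ((hmem x y).2 ⟨hx, hy⟩)]
      · rw [indicator_of_notMem hy, indicator_of_notMem (fun h => hy ((hmem x y).1 h).2)]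
    · rw [indicator_of_notMem hx]
      have : ∀ y, D.indicator F (x, y) = 0 := fun y =>
        indicator_of_notMem (fun h => hx ((hmem x y).1 h).1) _
      simp [this]
  · rw [← Measure.volume_eq_prod]
    exact hint.integrable_indicator hD.measurableSet

lemma slice_gen_swap (D : Set (ℝ × ℝ)) (hD : IsCompact D) (F : ℝ × ℝ → ℝ) (hF : Continuous F)
    (a b : ℝ) (hab : a ≤ b) (l r : ℝ → ℝ) (hlr : ∀ x ∈ Icc a b, l x ≤ r x)
    (hmem : ∀ x y, (x, y) ∈ D ↔ y ∈ Icc a b ∧ x ∈ Icc (l y) (r y)) :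
    ∫ p in D, F p = ∫ y in a..b, ∫ x in (l y)..(r y), F (x, y) := by
  have h := slice_gen (Prod.swap ⁻¹' D)
    (by
      have : Prod.swap ⁻¹' D = Prod.swap '' D := by
        rw [Set.image_swap_eq_preimage_swap]
      rw [this]; exact hD.image continuous_swap)
    (fun p => F p.swap) (hF.comp continuous_swap) a b hab l r hlr
    (fun x y => by simpa using hmem y x)
  simp only [Prod.swap_prod_mk] at h
  rw [← h]
  have hm : MeasurePreserving (Prod.swap : ℝ × ℝ → ℝ × ℝ) volume volume :=
    Measure.measurePreserving_swap
  exact (hm.setIntegral_preimage_emb MeasurableEquiv.prodComm.measurableEmbedding F D).symm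

/-- height function -/
def hh (α β x : ℝ) : ℝ := √(β ^ 2 - (max (x - α) 0) ^ 2)

lemma DD_mem_y (α β c : ℝ) (x y : ℝ) :
    (x, y) ∈ DD α β c ↔ y ∈ Icc (-β) β ∧ x ∈ Icc c (α + √(β ^ 2 - y ^ 2)) := by
  simp only [DD, mem_ofPred_eq, mem_Icc]; tauto

lemma DD_mem_iff (α β c : ℝ) (hβ : 0 < β) (x y : ℝ) :
    (x, y) ∈ DD α β c ↔ c ≤ x ∧ (max (x - α) 0) ^ 2 + y ^ 2 ≤ β ^ 2 := by
  simp only [DD, mem_ofPred_eq]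
  constructor
  · rintro ⟨h1, h2, h3, h4⟩
    refine ⟨h1, ?_⟩
    have hy : y ^ 2 ≤ β ^ 2 := by nlinarith
    have : max (x - α) 0 ≤ √(β ^ 2 - y ^ 2) := max_le (by linarith) (Real.sqrt_nonneg _)
    have h5 := pow_le_pow_left₀ (le_max_right _ _) this 2
    rw [Real.sq_sqrt (by linarith)] at h5
    linarith
  · rintro ⟨h1, h2⟩
    have hm := sq_nonneg (max (x - α) 0)
    have := abs_le.1 (abs_le_of_sq_le_sq (show y ^ 2 ≤ β ^ 2 by linarith) hβ.le)
    refine ⟨h1, this.1, this.2, ?_⟩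
    have h3 := Real.le_sqrt_of_sq_le (show (max (x - α) 0) ^ 2 ≤ β ^ 2 - y ^ 2 by linarith)
    have := le_max_left (x - α) 0
    linarith

lemma DD_mem_x (α β c : ℝ) (hβ : 0 < β) (x y : ℝ) :
    (x, y) ∈ DD α β c ↔ x ∈ Icc c (α + β) ∧ y ∈ Icc (-hh α β x) (hh α β x) := by
  rw [DD_mem_iff α β c hβ]
  have hm := le_max_left (x - α) 0
  have hm' := le_max_right (x - α) 0
  simp only [mem_Icc, hh]
  constructor
  · rintro ⟨h1, h2⟩
    refine ⟨⟨h1, ?_⟩, ?_⟩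
    · nlinarith [sq_nonneg y]
    · rw [← abs_le]
      exact Real.abs_le_sqrt (by linarith)
  · rintro ⟨⟨h1, h2⟩, h3⟩
    refine ⟨h1, ?_⟩
    rw [← abs_le] at h3
    have h4 : max (x - α) 0 ≤ β := max_le (by linarith) hβ.le
    have h5 : 0 ≤ β ^ 2 - (max (x - α) 0) ^ 2 := by nlinarith
    have h6 := pow_le_pow_left₀ (abs_nonneg y) h3 2
    rw [Real.sq_sqrt h5, sq_abs] at h6
    linarith

lemma div_P (α β c : ℝ) (hβ : 0 < β) (hc : c ≤ α) (P P' : ℝ × ℝ → ℝ)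
    (hP : Continuous P) (hP' : Continuous P')
    (hd : ∀ x y, HasDerivAt (fun t => P (t, y)) (P' (x, y)) x) :
    ∫ p in DD α β c, P' p =
      (∫ θ in (-(π / 2))..(π / 2), P (α + β * cos θ, β * sin θ) * (β * cos θ)) -
      ∫ y in (-β)..β, P (c, y) := by
  rw [slice_gen_swap _ (DD_isCompact α β c) P' hP' (-β) β (by linarith) (fun _ => c)
    (fun y => α + √(β ^ 2 - y ^ 2))
    (fun y _ => by have := Real.sqrt_nonneg (β ^ 2 - y ^ 2); linarith)
    (DD_mem_y α β c)]
  have h1 : ∀ y, ∫ x in c..(α + √(β ^ 2 - y ^ 2)), P' (x, y) =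
      P (α + √(β ^ 2 - y ^ 2), y) - P (c, y) := fun y =>
    intervalIntegral.integral_eq_sub_of_hasDerivAt (fun x _ => hd x y)
      (Continuous.intervalIntegrable (by fun_prop) _ _)
  simp only [h1]
  rw [intervalIntegral.integral_sub (Continuous.intervalIntegrable (by fun_prop) _ _)
    (Continuous.intervalIntegrable (by fun_prop) _ _)]
  congr 1
  have h2 := intervalIntegral.integral_comp_mul_deriv (a := -(π / 2)) (b := π / 2)
    (f := fun θ => β * sin θ) (f' := fun θ => β * cos θ)
    (g := fun y => P (α + √(β ^ 2 - y ^ 2), y))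
    (fun θ _ => (Real.hasDerivAt_sin θ).const_mul β) (by fun_prop) (by fun_prop)
  simp only [Real.sin_neg, Real.sin_pi_div_two, mul_neg, mul_one] at h2
  rw [← h2]
  apply intervalIntegral.integral_congr
  intro θ hθ
  rw [uIcc_of_le (by linarith [Real.pi_pos])] at hθ
  have hcos := Real.cos_nonneg_of_mem_Icc hθ
  have : √(β ^ 2 - (β * sin θ) ^ 2) = β * cos θ := by
    rw [show β ^ 2 - (β * sin θ) ^ 2 = (β * cos θ) ^ 2 by
      linear_combination β ^ 2 * (- Real.sin_sq_add_cos_sq θ)]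
    exact Real.sqrt_sq (by positivity)
  simp [Function.comp, this]

lemma div_Q (α β c : ℝ) (hβ : 0 < β) (hc : c ≤ α) (Q Q' : ℝ × ℝ → ℝ)
    (hQ : Continuous Q) (hQ' : Continuous Q')
    (hd : ∀ x y, HasDerivAt (fun t => Q (x, t)) (Q' (x, y)) y)
    (hz : ∀ x ∈ Ioo c α, Q (x, β) = 0 ∧ Q (x, -β) = 0) :
    ∫ p in DD α β c, Q' p =
      ∫ θ in (-(π / 2))..(π / 2), Q (α + β * cos θ, β * sin θ) * (β * sin θ) := by
  have hhc : Continuous (hh α β) := by unfold hh; fun_prop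
  rw [slice_gen _ (DD_isCompact α β c) Q' hQ' c (α + β) (by linarith) (fun x => - hh α β x)
    (fun x => hh α β x)
    (fun y _ => by have : 0 ≤ hh α β y := Real.sqrt_nonneg _; linarith)
    (DD_mem_x α β c hβ)]
  have h1 : ∀ x, ∫ y in (-hh α β x)..(hh α β x), Q' (x, y) =
      Q (x, hh α β x) - Q (x, -hh α β x) := fun x =>
    intervalIntegral.integral_eq_sub_of_hasDerivAt (fun y _ => hd x y)
      (Continuous.intervalIntegrable (by fun_prop) _ _)
  simp only [h1]
  have hI : ∀ a b, IntervalIntegrable (fun x => Q (x, hh α β x) - Q (x, -hh α β x)) volume a b :=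
    fun a b => Continuous.intervalIntegrable (by fun_prop) _ _
  rw [← intervalIntegral.integral_add_adjacent_intervals (hI c α) (hI α (α + β))]
  have h0 : ∫ x in c..α, (Q (x, hh α β x) - Q (x, -hh α β x)) = 0 := by
    rw [intervalIntegral.integral_of_le hc, integral_Ioc_eq_integral_Ioo]
    apply setIntegral_eq_zero_of_forall_eq_zero
    intro x hx
    have : hh α β x = β := by
      unfold hh
      rw [max_eq_right (by linarith [hx.2])]
      simp [Real.sqrt_sq hβ.le]
    rw [this, (hz x hx).1, (hz x hx).2, sub_zero]
  rw [h0, zero_add]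
  have h2 := intervalIntegral.integral_comp_mul_deriv (a := 0) (b := π / 2)
    (f := fun θ => α + β * cos θ) (f' := fun θ => β * (- sin θ))
    (g := fun x => Q (x, hh α β x) - Q (x, -hh α β x))
    (fun θ _ => ((Real.hasDerivAt_cos θ).const_mul β).const_add α) (by fun_prop) (by fun_prop)
  simp only [Real.cos_zero, Real.cos_pi_div_two, mul_zero, mul_one, add_zero] at h2
  rw [intervalIntegral.integral_symm, ← h2]
  have hJ : ∀ a b, IntervalIntegrable
    (fun θ => Q (α + β * cos θ, β * sin θ) * (β * sin θ)) volume a b :=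
    fun a b => Continuous.intervalIntegrable (by fun_prop) _ _
  rw [← intervalIntegral.integral_add_adjacent_intervals (hJ (-(π / 2)) 0) (hJ 0 (π / 2))]
  have h3 := intervalIntegral.integral_comp_neg (a := 0) (b := π / 2)
    (fun θ => Q (α + β * cos θ, β * sin θ) * (β * sin θ))
  rw [neg_zero] at h3
  rw [← h3, ← intervalIntegral.integral_add (Continuous.intervalIntegrable (by fun_prop) _ _)
    (hJ _ _), ← intervalIntegral.integral_neg]
  apply intervalIntegral.integral_congr
  intro θ hθ
  rw [uIcc_of_le (by linarith [Real.pi_pos])] at hθ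
  have hcos := Real.cos_nonneg_of_mem_Icc (show θ ∈ Icc (-(π / 2)) (π / 2) from
    ⟨by linarith [hθ.1, Real.pi_pos], hθ.2⟩)
  have hsin := Real.sin_nonneg_of_mem_Icc (show θ ∈ Icc 0 π from
    ⟨hθ.1, by linarith [hθ.2, Real.pi_pos]⟩)
  have : hh α β (α + β * cos θ) = β * sin θ := by
    unfold hh
    rw [show α + β * cos θ - α = β * cos θ by ring, max_eq_left (by positivity),
      show β ^ 2 - (β * cos θ) ^ 2 = (β * sin θ) ^ 2 by
      linear_combination β ^ 2 * (- Real.sin_sq_add_cos_sq θ)]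
    exact Real.sqrt_sq (by positivity)
  simp only [Function.comp, this, Real.cos_neg, Real.sin_neg, mul_neg]
  ring

lemma div_PQ (α β c : ℝ) (hβ : 0 < β) (hc : c ≤ α) (P P' Q Q' : ℝ × ℝ → ℝ)
    (hP : Continuous P) (hP' : Continuous P') (hQ : Continuous Q) (hQ' : Continuous Q')
    (hdP : ∀ x y, HasDerivAt (fun t => P (t, y)) (P' (x, y)) x)
    (hdQ : ∀ x y, HasDerivAt (fun t => Q (x, t)) (Q' (x, y)) y)
    (hz : ∀ x ∈ Ioo c α, Q (x, β) = 0 ∧ Q (x, -β) = 0) :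
    ∫ p in DD α β c, (P' p + Q' p) =
      (∫ θ in (-(π / 2))..(π / 2), β * (P (α + β * cos θ, β * sin θ) * cos θ +
        Q (α + β * cos θ, β * sin θ) * sin θ)) - ∫ y in (-β)..β, P (c, y) := by
  rw [integral_add (hP'.continuousOn.integrableOn_compact (DD_isCompact α β c))
    (hQ'.continuousOn.integrableOn_compact (DD_isCompact α β c)),
    div_P α β c hβ hc P P' hP hP' hdP, div_Q α β c hβ hc Q Q' hQ hQ' hdQ hz,
    sub_add_eq_add_sub, ← intervalIntegral.integral_add
      (Continuous.intervalIntegrable (by fun_prop) _ _)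
      (Continuous.intervalIntegrable (by fun_prop) _ _)]
  congr 2
  ext θ
  ring

structure Jet (u ux uy uxx uxy uyy uxyy : ℝ × ℝ → ℝ) : Prop where
  du : Differentiable ℝ u
  dux : Differentiable ℝ ux
  duy : Differentiable ℝ uy
  cu : Continuous u
  cux : Continuous ux
  cuy : Continuous uy
  cuxx : Continuous uxx
  cuxy : Continuous uxy
  cuyy : Continuous uyy
  cuxyy : Continuous uxyy
  hx : ∀ x y, HasDerivAt (fun t => u (t, y)) (ux (x, y)) x
  hy : ∀ x y, HasDerivAt (fun t => u (x, t)) (uy (x, y)) y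
  hxx : ∀ x y, HasDerivAt (fun t => ux (t, y)) (uxx (x, y)) x
  hxy : ∀ x y, HasDerivAt (fun t => ux (x, t)) (uxy (x, y)) y
  hyx : ∀ x y, HasDerivAt (fun t => uy (t, y)) (uxy (x, y)) x
  hyy : ∀ x y, HasDerivAt (fun t => uy (x, t)) (uyy (x, y)) y
  hyyx : ∀ x y, HasDerivAt (fun t => uyy (t, y)) (uxyy (x, y)) x
  hxyy : ∀ x y, HasDerivAt (fun t => uxy (x, t)) (uxyy (x, y)) y

structure Dir (α β : ℝ) (u : ℝ × ℝ → ℝ) : Prop where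
  flat : ∀ x ∈ Ioo 0 α, u (x, β) = 0 ∧ u (x, -β) = 0
  arc : ∀ θ ∈ Icc (-(π / 2)) (π / 2), u (α + β * cos θ, β * sin θ) = 0

lemma chain_arc (α β : ℝ) (G Gx Gy : ℝ × ℝ → ℝ) (hG : Differentiable ℝ G)
    (hx : ∀ x y, HasDerivAt (fun t => G (t, y)) (Gx (x, y)) x)
    (hy : ∀ x y, HasDerivAt (fun t => G (x, t)) (Gy (x, y)) y) (θ : ℝ) :
    HasDerivAt (fun θ => G (α + β * cos θ, β * sin θ))
      (Gx (α + β * cos θ, β * sin θ) * (-β * sin θ) +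
        Gy (α + β * cos θ, β * sin θ) * (β * cos θ)) θ := by
  have hγ : HasDerivAt (fun θ => ((α + β * cos θ, β * sin θ) : ℝ × ℝ))
      (β * (-sin θ), β * cos θ) θ :=
    (((Real.hasDerivAt_cos θ).const_mul β).const_add α).prodMk
      ((Real.hasDerivAt_sin θ).const_mul β)
  have hF := (hG (α + β * cos θ, β * sin θ)).hasFDerivAt
  have h1 := hF.comp_hasDerivAt θ hγ
  have e1 : fderiv ℝ G (α + β * cos θ, β * sin θ) (1, 0) = Gx (α + β * cos θ, β * sin θ) := by
    have := hF.comp_hasDerivAt (α + β * cos θ)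
      ((hasDerivAt_id (α + β * cos θ)).prodMk (hasDerivAt_const _ (β * sin θ)))
    exact this.unique (hx _ _)
  have e2 : fderiv ℝ G (α + β * cos θ, β * sin θ) (0, 1) = Gy (α + β * cos θ, β * sin θ) := by
    have := hF.comp_hasDerivAt (β * sin θ)
      ((hasDerivAt_const (β * sin θ) (α + β * cos θ)).prodMk (hasDerivAt_id (β * sin θ)))
    exact this.unique (hy _ _)
  refine HasDerivAt.congr_deriv h1 ?_
  rw [show ((β * (-sin θ), β * cos θ) : ℝ × ℝ) =
    (β * (-sin θ)) • (1, 0) + (β * cos θ) • (0, 1) by simp, map_add, map_smul, map_smul, e1, e2]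
  simp only [smul_eq_mul]
  ring

section
variable {α β : ℝ} {u ux uy uxx uxy uyy uxyy : ℝ × ℝ → ℝ}

lemma ux_flat (J : Jet u ux uy uxx uxy uyy uxyy) (D : Dir α β u) :
    ∀ x ∈ Ioo 0 α, ux (x, β) = 0 ∧ ux (x, -β) = 0 := by
  intro x hx
  have hn : Ioo 0 α ∈ nhds x := isOpen_Ioo.mem_nhds hx
  constructor
  · refine (J.hx x β).unique ((hasDerivAt_const x (0 : ℝ)).congr_of_eventuallyEq ?_)
    filter_upwards [hn] with t ht using (D.flat t ht).1
  · refine (J.hx x (-β)).unique ((hasDerivAt_const x (0 : ℝ)).congr_of_eventuallyEq ?_)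
    filter_upwards [hn] with t ht using (D.flat t ht).2

lemma tang_arc (hβ : 0 < β) (J : Jet u ux uy uxx uxy uyy uxyy) (D : Dir α β u) :
    ∀ θ ∈ Icc (-(π / 2)) (π / 2), uy (α + β * cos θ, β * sin θ) * cos θ -
      ux (α + β * cos θ, β * sin θ) * sin θ = 0 := by
  have hcl : IsClosed {θ : ℝ | uy (α + β * cos θ, β * sin θ) * cos θ -
      ux (α + β * cos θ, β * sin θ) * sin θ = 0} := by
    have := J.cux
    have := J.cuy
    exact isClosed_eq (by fun_prop) (by fun_prop)
  rw [← closure_Ioo (by linarith [Real.pi_pos])]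
  refine closure_minimal ?_ hcl
  intro θ hθ
  have hn : Ioo (-(π / 2)) (π / 2) ∈ nhds θ := isOpen_Ioo.mem_nhds hθ
  have := (chain_arc α β u ux uy J.du J.hx J.hy θ).unique
    ((hasDerivAt_const θ (0 : ℝ)).congr_of_eventuallyEq (by
      filter_upwards [hn] with t ht using D.arc t ⟨ht.1.le, ht.2.le⟩))
  have h2 : β * (uy (α + β * cos θ, β * sin θ) * cos θ -
      ux (α + β * cos θ, β * sin θ) * sin θ) = 0 := by linarith
  exact (mul_eq_zero.1 h2).resolve_left hβ.ne'

/-- normal derivative along the right arc -/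
def gg (α β : ℝ) (ux uy : ℝ × ℝ → ℝ) (θ : ℝ) : ℝ :=
  ux (α + β * cos θ, β * sin θ) * cos θ + uy (α + β * cos θ, β * sin θ) * sin θ

lemma ux_arc (hβ : 0 < β) (J : Jet u ux uy uxx uxy uyy uxyy) (D : Dir α β u) :
    ∀ θ ∈ Icc (-(π / 2)) (π / 2), ux (α + β * cos θ, β * sin θ) = gg α β ux uy θ * cos θ ∧
      uy (α + β * cos θ, β * sin θ) = gg α β ux uy θ * sin θ := by
  intro θ hθ
  have h := tang_arc hβ J D θ hθ
  have h1 := Real.sin_sq_add_cos_sq θ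
  unfold gg
  constructor
  · linear_combination (-ux (α + β * cos θ, β * sin θ)) * h1 - sin θ * h
  · linear_combination (-uy (α + β * cos θ, β * sin θ)) * h1 + cos θ * h

lemma identA (hα : 0 < α) (hβ : 0 < β) (J : Jet u ux uy uxx uxy uyy uxyy) (D : Dir α β u) :
    ∫ p in DD α β 0, (ux p ^ 2 + uy p ^ 2 + u p * (uxx p + uyy p)) =
      - ∫ y in (-β)..β, u (0, y) * ux (0, y) := by
  have := J.cu; have := J.cux; have := J.cuy; have := J.cuxx; have := J.cuxy; have := J.cuyy
  have h := div_PQ α β 0 hβ hα.le (fun p => u p * ux p) (fun p => ux p * ux p + u p * uxx p)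
    (fun p => u p * uy p) (fun p => uy p * uy p + u p * uyy p)
    (by fun_prop) (by fun_prop) (by fun_prop) (by fun_prop)
    (fun x y => (J.hx x y).mul (J.hxx x y)) (fun x y => (J.hy x y).mul (J.hyy x y))
    (fun x hx => by simp [(D.flat x hx).1, (D.flat x hx).2])
  have h0 : (∫ θ in (-(π / 2))..(π / 2), β *
      (u (α + β * cos θ, β * sin θ) * ux (α + β * cos θ, β * sin θ) * cos θ +
        u (α + β * cos θ, β * sin θ) * uy (α + β * cos θ, β * sin θ) * sin θ)) =
      ∫ θ in (-(π / 2))..(π / 2), (0 : ℝ) := by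
    apply intervalIntegral.integral_congr
    intro θ hθ
    rw [uIcc_of_le (by linarith [Real.pi_pos])] at hθ
    simp [D.arc θ hθ]
  rw [h0, intervalIntegral.integral_zero, zero_sub] at h
  rw [← h]
  congr 1; ext p; ring

lemma identG (hα : 0 < α) (hβ : 0 < β) (J : Jet u ux uy uxx uxy uyy uxyy) (D : Dir α β u) :
    ∫ p in DD α β 0, (u p ^ 2 + 2 * (p.1 * u p * ux p)) = 0 := by
  have := J.cu; have := J.cux
  have h := div_P α β 0 hβ hα.le (fun p => p.1 * (u p * u p))
    (fun p => 1 * (u p * u p) + p.1 * (ux p * u p + u p * ux p))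
    (by fun_prop) (by fun_prop)
    (fun x y => (hasDerivAt_id x).mul ((J.hx x y).mul (J.hx x y)))
  have h0 : (∫ θ in (-(π / 2))..(π / 2), (α + β * cos θ) *
      (u (α + β * cos θ, β * sin θ) * u (α + β * cos θ, β * sin θ)) * (β * cos θ)) =
      ∫ θ in (-(π / 2))..(π / 2), (0 : ℝ) := by
    apply intervalIntegral.integral_congr
    intro θ hθ
    rw [uIcc_of_le (by linarith [Real.pi_pos])] at hθ
    simp [D.arc θ hθ]
  rw [h0] at h
  simp only [zero_mul, intervalIntegral.integral_zero, sub_zero] at h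
  refine Eq.trans ?_ h
  congr 1; ext p; ring

lemma identB (hα : 0 < α) (hβ : 0 < β) (J : Jet u ux uy uxx uxy uyy uxyy) (D : Dir α β u)
    (L : ℝ) :
    ∫ p in DD α β 0, (ux p ^ 2 - 1 / 2 * (ux p ^ 2 + uy p ^ 2 - L * u p ^ 2) +
        p.1 * ux p * (uxx p + uyy p + L * u p)) =
      ∫ θ in (-(π / 2))..(π / 2), 1 / 2 * β * (α + β * cos θ) * cos θ * gg α β ux uy θ ^ 2 := by
  have := J.cu; have := J.cux; have := J.cuy; have := J.cuxx; have := J.cuxy; have := J.cuyy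
  have h := div_PQ α β 0 hβ hα.le
    (fun p => p.1 * (ux p * ux p - 1 / 2 * (ux p * ux p + uy p * uy p - L * (u p * u p))))
    (fun p => 1 * (ux p * ux p - 1 / 2 * (ux p * ux p + uy p * uy p - L * (u p * u p))) +
      p.1 * ((uxx p * ux p + ux p * uxx p) - 1 / 2 * ((uxx p * ux p + ux p * uxx p) +
        (uxy p * uy p + uy p * uxy p) - L * (ux p * u p + u p * ux p))))
    (fun p => p.1 * (ux p * uy p)) (fun p => p.1 * (uxy p * uy p + ux p * uyy p))
    (by fun_prop) (by fun_prop) (by fun_prop) (by fun_prop)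
    (fun x y => (hasDerivAt_id x).mul (((J.hxx x y).mul (J.hxx x y)).sub
      (((((J.hxx x y).mul (J.hxx x y)).add ((J.hyx x y).mul (J.hyx x y))).sub
        (((J.hx x y).mul (J.hx x y)).const_mul L)).const_mul (1 / 2))))
    (fun x y => ((J.hxy x y).mul (J.hyy x y)).const_mul x)
    (fun x hx => by simp [(ux_flat J D x hx).1, (ux_flat J D x hx).2])
  simp only [zero_mul, intervalIntegral.integral_zero, sub_zero] at h
  trans
  swap
  · refine h.trans ?_
    apply intervalIntegral.integral_congr
    intro θ hθ
    rw [uIcc_of_le (by linarith [Real.pi_pos])] at hθ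
    have h1 := Real.sin_sq_add_cos_sq θ
    simp only [D.arc θ hθ, (ux_arc hβ J D θ hθ).1, (ux_arc hβ J D θ hθ).2]
    linear_combination β * (α + β * cos θ) * gg α β ux uy θ ^ 2 * cos θ * (1/2) * h1
  · congr 1; ext p; ring

lemma identC (hβ : 0 < β) (J : Jet u ux uy uxx uxy uyy uxyy) (D : Dir α β u)
    (L : ℝ) :
    ∫ p in DD α β α, (2 * (p.1 - α) * ux p ^ 2 + p.2 * (ux p * uy p) + (p.1 - α) * uy p ^ 2
        - 3 / 2 * (p.1 - α) * (ux p ^ 2 + uy p ^ 2 - L * u p ^ 2) +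
        (p.1 - α) * ((p.1 - α) * ux p + p.2 * uy p) * (uxx p + uyy p + L * u p)) =
      ∫ θ in (-(π / 2))..(π / 2), 1 / 2 * β ^ 3 * cos θ * gg α β ux uy θ ^ 2 := by
  have := J.cu; have := J.cux; have := J.cuy; have := J.cuxx; have := J.cuxy; have := J.cuyy
  have h := div_PQ α β α hβ le_rfl
    (fun p => (p.1 - α) * (((p.1 - α) * ux p + p.2 * uy p) * ux p -
      1 / 2 * ((p.1 - α) * (ux p * ux p + uy p * uy p - L * (u p * u p)))))
    (fun p => 1 * (((p.1 - α) * ux p + p.2 * uy p) * ux p -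
        1 / 2 * ((p.1 - α) * (ux p * ux p + uy p * uy p - L * (u p * u p)))) +
      (p.1 - α) * ((((1 * ux p + (p.1 - α) * uxx p) + p.2 * uxy p) * ux p +
        ((p.1 - α) * ux p + p.2 * uy p) * uxx p) -
      1 / 2 * (1 * (ux p * ux p + uy p * uy p - L * (u p * u p)) +
       (p.1 - α) * ((uxx p * ux p + ux p * uxx p) +
        (uxy p * uy p + uy p * uxy p) - L * (ux p * u p + u p * ux p)))))
    (fun p => (p.1 - α) * (((p.1 - α) * ux p + p.2 * uy p) * uy p -
      1 / 2 * (p.2 * (ux p * ux p + uy p * uy p - L * (u p * u p)))))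
    (fun p => (p.1 - α) * ((((p.1 - α) * uxy p + (1 * uy p + p.2 * uyy p)) * uy p +
        ((p.1 - α) * ux p + p.2 * uy p) * uyy p) -
      1 / 2 * (1 * (ux p * ux p + uy p * uy p - L * (u p * u p)) +
       p.2 * ((uxy p * ux p + ux p * uxy p) +
        (uyy p * uy p + uy p * uyy p) - L * (uy p * u p + u p * uy p)))))
    (by fun_prop) (by fun_prop) (by fun_prop) (by fun_prop)
    (fun x y => by
      have hρ : HasDerivAt (fun t => t - α) 1 x := (hasDerivAt_id x).sub_const α
      exact hρ.mul ((((hρ.mul (J.hxx x y)).add ((J.hyx x y).const_mul y)).mul (J.hxx x y)).sub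
        ((hρ.mul ((((J.hxx x y).mul (J.hxx x y)).add ((J.hyx x y).mul (J.hyx x y))).sub
        (((J.hx x y).mul (J.hx x y)).const_mul L))).const_mul (1 / 2))))
    (fun x y => by
      have hy : HasDerivAt (fun t : ℝ => t) 1 y := hasDerivAt_id y
      exact ((((((J.hxy x y).const_mul (x - α)).add (hy.mul (J.hyy x y))).mul (J.hyy x y)).sub
        ((hy.mul ((((J.hxy x y).mul (J.hxy x y)).add ((J.hyy x y).mul (J.hyy x y))).sub
        (((J.hy x y).mul (J.hy x y)).const_mul L))).const_mul (1 / 2)))).const_mul (x - α))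
    (fun x hx => by simp at hx)
  simp only [sub_self, zero_mul, intervalIntegral.integral_zero, sub_zero] at h
  trans
  swap
  · refine h.trans ?_
    apply intervalIntegral.integral_congr
    intro θ hθ
    rw [uIcc_of_le (by linarith [Real.pi_pos])] at hθ
    have h1 := Real.sin_sq_add_cos_sq θ
    simp only [D.arc θ hθ, (ux_arc hβ J D θ hθ).1, (ux_arc hβ J D θ hθ).2]
    have e : sin θ ^ 2 = 1 - cos θ ^ 2 := by linarith
    have e4 : sin θ ^ 4 = (1 - cos θ ^ 2) ^ 2 := by rw [← e]; ring
    ring_nf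
    simp only [e, e4]
    ring
  · congr 1; ext p; ring

lemma identD (hβ : 0 < β) (J : Jet u ux uy uxx uxy uyy uxyy) (D : Dir α β u) :
    ∫ p in DD α β α, ((p.1 - α) * (ux p ^ 2 + uy p ^ 2) + u p * ux p +
      (p.1 - α) * u p * (uxx p + uyy p)) = 0 := by
  have := J.cu; have := J.cux; have := J.cuy; have := J.cuxx; have := J.cuxy; have := J.cuyy
  have h := div_PQ α β α hβ le_rfl
    (fun p => (p.1 - α) * (u p * ux p))
    (fun p => 1 * (u p * ux p) + (p.1 - α) * (ux p * ux p + u p * uxx p))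
    (fun p => (p.1 - α) * (u p * uy p))
    (fun p => (p.1 - α) * (uy p * uy p + u p * uyy p))
    (by fun_prop) (by fun_prop) (by fun_prop) (by fun_prop)
    (fun x y => ((hasDerivAt_id x).sub_const α).mul ((J.hx x y).mul (J.hxx x y)))
    (fun x y => ((J.hy x y).mul (J.hyy x y)).const_mul (x - α))
    (fun x hx => by simp at hx)
  have h0 : (∫ θ in (-(π / 2))..(π / 2), β *
      ((α + β * cos θ - α) * (u (α + β * cos θ, β * sin θ) *
        ux (α + β * cos θ, β * sin θ)) * cos θ +
       (α + β * cos θ - α) * (u (α + β * cos θ, β * sin θ) *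
        uy (α + β * cos θ, β * sin θ)) * sin θ)) =
      ∫ θ in (-(π / 2))..(π / 2), (0 : ℝ) := by
    apply intervalIntegral.integral_congr
    intro θ hθ
    rw [uIcc_of_le (by linarith [Real.pi_pos])] at hθ
    simp [D.arc θ hθ]
  rw [h0] at h
  simp only [sub_self, zero_mul, intervalIntegral.integral_zero, sub_zero] at h
  rw [← h]
  congr 1; ext p; ring

lemma identE (hβ : 0 < β) (J : Jet u ux uy uxx uxy uyy uxyy) (D : Dir α β u) :
    ∫ p in DD α β α, (p.2 * (ux p * uy p) + u p * ux p + p.2 * u p * uxy p) = 0 := by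
  have := J.cu; have := J.cux; have := J.cuy; have := J.cuxx; have := J.cuxy; have := J.cuyy
  have h := div_Q α β α hβ le_rfl
    (fun p => p.2 * (u p * ux p))
    (fun p => 1 * (u p * ux p) + p.2 * (uy p * ux p + u p * uxy p))
    (by fun_prop) (by fun_prop)
    (fun x y => (hasDerivAt_id y).mul ((J.hy x y).mul (J.hxy x y)))
    (fun x hx => by simp at hx)
  have h0 : (∫ θ in (-(π / 2))..(π / 2), (β * sin θ) * (u (α + β * cos θ, β * sin θ) *
        ux (α + β * cos θ, β * sin θ)) * (β * sin θ)) =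
      ∫ θ in (-(π / 2))..(π / 2), (0 : ℝ) := by
    apply intervalIntegral.integral_congr
    intro θ hθ
    rw [uIcc_of_le (by linarith [Real.pi_pos])] at hθ
    simp [D.arc θ hθ]
  rw [h0] at h
  simp only [intervalIntegral.integral_zero] at h
  refine Eq.trans ?_ h
  congr 1; ext p; ring

lemma identF (hα : 0 < α) (hβ : 0 < β) (J : Jet u ux uy uxx uxy uyy uxyy) (D : Dir α β u) :
    0 ≤ (∫ p in DD α β 0, (uxx p * uyy p - uxy p ^ 2)) +
      ∫ y in (-β)..β, ux (0, y) * uyy (0, y) := by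
  have := J.cu; have := J.cux; have := J.cuy; have := J.cuxx; have := J.cuxy; have := J.cuyy
  have := J.cuxyy
  have h := div_PQ α β 0 hβ hα.le
    (fun p => ux p * uyy p)
    (fun p => uxx p * uyy p + ux p * uxyy p)
    (fun p => - (ux p * uxy p))
    (fun p => - (uxy p * uxy p + ux p * uxyy p))
    (by fun_prop) (by fun_prop) (by fun_prop) (by fun_prop)
    (fun x y => (J.hxx x y).mul (J.hyyx x y))
    (fun x y => ((J.hxy x y).mul (J.hxyy x y)).neg)
    (fun x hx => by simp [(ux_flat J D x hx).1, (ux_flat J D x hx).2])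
  have e1 : (∫ p in DD α β 0, (uxx p * uyy p - uxy p ^ 2)) =
    ∫ p in DD α β 0, (uxx p * uyy p + ux p * uxyy p + -(uxy p * uxy p + ux p * uxyy p)) := by
    congr 1; ext p; ring
  rw [e1, h, sub_add_cancel]
  set γ : ℝ → ℝ × ℝ := fun θ => (α + β * cos θ, β * sin θ) with hγ
  have hγc : Continuous γ := by fun_prop
  have hA : ∀ θ, HasDerivAt (fun θ => ux (γ θ))
    (uxx (γ θ) * (-β * sin θ) + uxy (γ θ) * (β * cos θ)) θ :=
    chain_arc α β ux uxx uxy J.dux J.hxx J.hxy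
  have hB : ∀ θ, HasDerivAt (fun θ => uy (γ θ))
    (uxy (γ θ) * (-β * sin θ) + uyy (γ θ) * (β * cos θ)) θ :=
    chain_arc α β uy uxy uyy J.duy J.hyx J.hyy
  have hFTC := intervalIntegral.integral_eq_sub_of_hasDerivAt (a := -(π / 2)) (b := π / 2)
    (fun θ _ => (hA θ).mul (hB θ)) (Continuous.intervalIntegrable (by fun_prop) _ _)
  have hpi := Real.pi_pos
  have z1 : ux (γ (π / 2)) = 0 := by
    rw [(ux_arc hβ J D (π / 2) ⟨by linarith, le_rfl⟩).1]; simp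
  have z2 : ux (γ (-(π / 2))) = 0 := by
    rw [(ux_arc hβ J D (-(π / 2)) ⟨le_rfl, by linarith⟩).1]; simp
  simp only [Pi.mul_apply, z1, z2, zero_mul, sub_zero] at hFTC
  have key : 2 * (∫ θ in (-(π / 2))..(π / 2), β * (ux (γ θ) * uyy (γ θ) * cos θ +
      -(ux (γ θ) * uxy (γ θ)) * sin θ)) =
      ∫ θ in (-(π / 2))..(π / 2), gg α β ux uy θ ^ 2 := by
    rw [← intervalIntegral.integral_const_mul, ← sub_zero (intervalIntegral _ _ _ _), ← hFTC,
      ← intervalIntegral.integral_sub (Continuous.intervalIntegrable (by fun_prop) _ _)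
      (Continuous.intervalIntegrable (by fun_prop) _ _)]
    rw [intervalIntegral.integral_of_le (by linarith), intervalIntegral.integral_of_le (by linarith),
      integral_Ioc_eq_integral_Ioo, integral_Ioc_eq_integral_Ioo]
    apply setIntegral_congr_fun measurableSet_Ioo
    intro θ hθ
    have hn : Ioo (-(π / 2)) (π / 2) ∈ nhds θ := isOpen_Ioo.mem_nhds hθ
    have ht := (((hB θ).mul (Real.hasDerivAt_cos θ)).sub
      ((hA θ).mul (Real.hasDerivAt_sin θ))).unique
      ((hasDerivAt_const θ (0 : ℝ)).congr_of_eventuallyEq (by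
        filter_upwards [hn] with t ht using tang_arc hβ J D t ⟨ht.1.le, ht.2.le⟩))
    have h1 := (ux_arc hβ J D θ ⟨hθ.1.le, hθ.2.le⟩).1
    have h2 := (ux_arc hβ J D θ ⟨hθ.1.le, hθ.2.le⟩).2
    change ux (γ θ) = _ at h1
    change uy (γ θ) = _ at h2
    have h3 := Real.sin_sq_add_cos_sq θ
    simp only [h1, h2] at ht ⊢
    linear_combination (gg α β ux uy θ) * ht + (gg α β ux uy θ) ^ 2 * h3
  have : 0 ≤ ∫ θ in (-(π / 2))..(π / 2), gg α β ux uy θ ^ 2 :=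
    intervalIntegral.integral_nonneg (by linarith) (fun θ _ => sq_nonneg _)
  linarith
end

section
variable {α β : ℝ} {u ux uy uxx uxy uyy uxyy f : ℝ × ℝ → ℝ}

lemma cs_bound (D : Set (ℝ × ℝ)) (hD : IsCompact D) (m a b : ℝ × ℝ → ℝ) (hm : Continuous m)
    (ha : Continuous a) (hb : Continuous b) (M A B : ℝ) (hA : 0 ≤ A) (hB : 0 ≤ B)
    (hM : ∀ p ∈ D, |m p| ≤ M) (hM0 : 0 ≤ M)
    (h1 : ∫ p in D, a p ^ 2 ≤ A ^ 2) (h2 : ∫ p in D, b p ^ 2 ≤ B ^ 2) :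
    |∫ p in D, m p * a p * b p| ≤ M * A * B := by
  have hi : ∀ F : ℝ × ℝ → ℝ, Continuous F → Integrable F (volume.restrict D) := fun F hF =>
    hF.continuousOn.integrableOn_compact hD
  have hC : |∫ p in D, m p * a p * b p| ≤ M * ∫ p in D, |a p| * |b p| := by
    refine abs_integral_le_integral_abs.trans ?_
    rw [← integral_const_mul]
    refine setIntegral_mono_on (hi _ (by fun_prop)) (hi _ (by fun_prop)) hD.measurableSet ?_
    intro p hp
    rw [abs_mul, abs_mul, mul_assoc]
    exact mul_le_mul_of_nonneg_right (hM p hp) (by positivity)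
  have hd := discrim_le_zero (a := ∫ p in D, a p ^ 2) (b := -2 * ∫ p in D, |a p| * |b p|)
    (c := ∫ p in D, b p ^ 2) (fun t => by
      have : 0 ≤ ∫ p in D, (t * |a p| - |b p|) ^ 2 := integral_nonneg (fun p => sq_nonneg _)
      have e : ∫ p in D, (t * |a p| - |b p|) ^ 2 = ∫ p in D, (t * t * a p ^ 2 +
          (-2 * t) * (|a p| * |b p|) + b p ^ 2) := by
        congr 1; ext p; rw [← sq_abs (a p), ← sq_abs (b p)]; ring
      rw [e, integral_add, integral_add, integral_const_mul, integral_const_mul] at this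
      · linarith
      all_goals exact hi _ (by fun_prop))
  have hab : 0 ≤ ∫ p in D, |a p| * |b p| := integral_nonneg (fun p => by positivity)
  have ha0 : 0 ≤ ∫ p in D, a p ^ 2 := integral_nonneg (fun p => by positivity)
  have hb0 : 0 ≤ ∫ p in D, b p ^ 2 := integral_nonneg (fun p => by positivity)
  unfold discrim at hd
  have h3 : (∫ p in D, |a p| * |b p|) ^ 2 ≤ (A * B) ^ 2 := by
    have := mul_le_mul h1 h2 hb0 (sq_nonneg A)
    nlinarith
  have h4 := abs_le_of_sq_le_sq h3 (by positivity)
  rw [abs_of_nonneg hab] at h4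
  calc _ ≤ _ := hC
    _ ≤ M * (A * B) := mul_le_mul_of_nonneg_left h4 hM0
    _ = _ := by ring

lemma DD_bounds (hβ : 0 < β) (c : ℝ) (p : ℝ × ℝ) (hp : p ∈ DD α β c) :
    c ≤ p.1 ∧ p.1 ≤ α + β ∧ |p.2| ≤ β := by
  obtain ⟨x, y⟩ := p
  have h1 := ((DD_mem_x α β c hβ x y).1 hp).1
  have h2 := ((DD_mem_y α β c x y).1 hp).1
  exact ⟨h1.1, h1.2, abs_le.2 h2⟩

set_option maxHeartbeats 1600000 in
lemma halfW (hβ : 0 < β) (J : Jet u ux uy uxx uxy uyy uxyy) (D : Dir α β u)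
    (l w F : ℝ) (hl : 1 ≤ l) (hw : 0 ≤ w) (hw1 : w ≤ 1) (hF : 0 ≤ F) (hF1 : F ≤ 1)
    (cf : Continuous f) (hf : ∀ p, uxx p + uyy p = - f p - l ^ 2 * u p)
    (bu : ∫ p in DD α β α, u p ^ 2 ≤ w ^ 2) (bf : ∫ p in DD α β α, f p ^ 2 ≤ F ^ 2)
    (bx : ∫ p in DD α β α, ux p ^ 2 ≤ (2 * l) ^ 2) (by' : ∫ p in DD α β α, uy p ^ 2 ≤ (2 * l) ^ 2)
    (bxy : ∫ p in DD α β α, uxy p ^ 2 ≤ (l ^ 2) ^ 2) :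
    ∫ θ in (-(π / 2))..(π / 2), 1 / 2 * β ^ 3 * cos θ * gg α β ux uy θ ^ 2 ≤
      (3 + 4 * β + 4 * β ^ 2) * (l ^ 2 * w + l * F) := by
  have := J.cu; have := J.cux; have := J.cuy; have := J.cuxx; have := J.cuxy; have := J.cuyy
  have hD := DD_isCompact α β α
  have hi : ∀ F : ℝ × ℝ → ℝ, Continuous F → Integrable F (volume.restrict (DD α β α)) :=
    fun F hF => hF.continuousOn.integrableOn_compact hD
  have hb := DD_bounds (α := α) hβ α
  have hρ : ∀ p ∈ DD α β α, |p.1 - α| ≤ β := fun p hp => by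
    rw [abs_le]; constructor <;> linarith [hb p hp]
  have hl0 : 0 ≤ l := by linarith
  have eC := identC hβ J D (l ^ 2)
  have eD := identD hβ J D
  have eE := identE hβ J D
  -- elementary bounds
  have t1 := cs_bound _ hD (fun _ => 1) u ux (by fun_prop) ‹_› ‹_› 1 w (2 * l) hw (by linarith)
    (fun p _ => by simp) (by norm_num) bu bx
  have t2 := cs_bound _ hD (fun p => p.1 - α) u f (by fun_prop) ‹_› ‹_› β w F hw hF hρ hβ.le bu bf
  have t3 := cs_bound _ hD (fun p => p.1 - α) u u (by fun_prop) ‹_› ‹_› β w w hw hw hρ hβ.le bu bu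
  have t4 := cs_bound _ hD (fun p => p.2) u uxy (by fun_prop) ‹_› ‹_› β w (l ^ 2) hw (by positivity)
    (fun p hp => (hb p hp).2.2) hβ.le bu bxy
  have t5 := cs_bound _ hD (fun p => (p.1 - α) * (p.1 - α)) ux f (by fun_prop) ‹_› ‹_› (β * β)
    (2 * l) F (by linarith) hF
    (fun p hp => by rw [abs_mul]; exact mul_le_mul (hρ p hp) (hρ p hp) (abs_nonneg _) hβ.le)
    (by positivity) bx bf
  have t6 := cs_bound _ hD (fun p => (p.1 - α) * p.2) uy f (by fun_prop) ‹_› ‹_› (β * β)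
    (2 * l) F (by linarith) hF
    (fun p hp => by rw [abs_mul]; exact mul_le_mul (hρ p hp) (hb p hp).2.2 (abs_nonneg _) hβ.le)
    (by positivity) by' bf
  have eD' : ∫ p in DD α β α, ((p.1 - α) * (ux p ^ 2 + uy p ^ 2) + 1 * u p * ux p -
      (p.1 - α) * u p * f p - l ^ 2 * ((p.1 - α) * u p * u p)) = 0 := by
    rw [← eD]; congr 1; ext p; rw [hf p]; ring
  rw [integral_sub, integral_sub, integral_add, integral_const_mul] at eD'
  rotate_left
  · exact hi _ (by fun_prop)
  · exact hi _ (by fun_prop)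
  · exact hi _ (by fun_prop)
  · exact hi _ (by fun_prop)
  · exact hi _ (by fun_prop)
  · exact hi _ (by fun_prop)
  have eE' : ∫ p in DD α β α, (p.2 * (ux p * uy p) + 1 * u p * ux p + p.2 * u p * uxy p) = 0 := by
    rw [← eE]; congr 1; ext p; ring
  rw [integral_add, integral_add] at eE'
  rotate_left
  · exact hi _ (by fun_prop)
  · exact hi _ (by fun_prop)
  · exact hi _ (by fun_prop)
  · exact hi _ (by fun_prop)
  have eC' : ∫ θ in (-(π / 2))..(π / 2), 1 / 2 * β ^ 3 * cos θ * gg α β ux uy θ ^ 2 ≤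
      ∫ p in DD α β α, (1 / 2 * ((p.1 - α) * (ux p ^ 2 + uy p ^ 2)) + p.2 * (ux p * uy p) +
        3 / 2 * l ^ 2 * ((p.1 - α) * u p * u p) - (p.1 - α) * (p.1 - α) * ux p * f p -
        (p.1 - α) * p.2 * uy p * f p) := by
    rw [← eC]
    refine setIntegral_mono_on (hi _ (by fun_prop)) (hi _ (by fun_prop)) hD.measurableSet ?_
    intro p hp
    have h1 : 0 ≤ p.1 - α := by linarith [(hb p hp).1]
    have h2 : 0 ≤ (p.1 - α) * uy p ^ 2 := by positivity
    rw [hf p]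
    nlinarith
  rw [integral_sub, integral_sub, integral_add, integral_add, integral_const_mul,
    integral_const_mul] at eC'
  rotate_left
  · exact hi _ (by fun_prop)
  · exact hi _ (by fun_prop)
  · exact hi _ (by fun_prop)
  · exact hi _ (by fun_prop)
  · exact hi _ (by fun_prop)
  · exact hi _ (by fun_prop)
  · exact hi _ (by fun_prop)
  · exact hi _ (by fun_prop)
  rw [abs_le] at t1 t2 t3 t4 t5 t6
  have hll : l ≤ l ^ 2 := by nlinarith
  have s1 : l * w ≤ l ^ 2 * w := mul_le_mul_of_nonneg_right hll hw
  have hlF : F ≤ l * F := by nlinarith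
  have s2 : w * F ≤ l ^ 2 * w := by
    have : w * F ≤ w * 1 := mul_le_mul_of_nonneg_left hF1 hw
    nlinarith
  have s3 : l ^ 2 * (w * w) ≤ l ^ 2 * w :=
    mul_le_mul_of_nonneg_left (by nlinarith) (by positivity)
  have s4 := mul_le_mul_of_nonneg_left t3.2 (sq_nonneg l)
  have s2' := mul_le_mul_of_nonneg_left s2 hβ.le
  have s3' := mul_le_mul_of_nonneg_left s3 hβ.le
  have s5 : 0 ≤ l ^ 2 * w := by positivity
  have s6 : 0 ≤ l * F := by positivity
  have s7 : 0 ≤ β * (l ^ 2 * w) := by positivity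
  have s8 : 0 ≤ β ^ 2 * (l ^ 2 * w) := by positivity
  have s9 : 0 ≤ β * (l * F) := by positivity
  linarith [t1.1, t1.2, t2.1, t2.2, t4.1, t4.2, t5.1, t5.2, t6.1, t6.2]

end

section
variable {α β : ℝ} {u ux uy uxx uxy uyy uxyy f v vx vy vxx vxy vyy vxyy fv : ℝ × ℝ → ℝ}

lemma DD_mono (hα : 0 < α) : DD α β α ⊆ DD α β 0 := by
  rintro p ⟨h1, h2⟩
  exact ⟨by linarith, h2⟩

lemma W_le (hα : 0 < α) (F : ℝ × ℝ → ℝ) (hF : Continuous F) (B : ℝ)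
    (h : ∫ p in DD α β 0, F p ^ 2 ≤ B) : ∫ p in DD α β α, F p ^ 2 ≤ B := by
  refine le_trans ?_ h
  refine setIntegral_mono_set ?_ ?_ ?_
  · exact (hF.pow 2).continuousOn.integrableOn_compact (DD_isCompact α β 0)
  · filter_upwards with p using sq_nonneg _
  · exact (DD_mono hα).eventuallyLE

lemma arcB_le (hα : 0 < α) (hβ : 0 < β) (J : Jet u ux uy uxx uxy uyy uxyy) :
    ∫ θ in (-(π / 2))..(π / 2), 1 / 2 * β * (α + β * cos θ) * cos θ * gg α β ux uy θ ^ 2 ≤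
     (α + β) / β ^ 2 *
      ∫ θ in (-(π / 2))..(π / 2), 1 / 2 * β ^ 3 * cos θ * gg α β ux uy θ ^ 2 := by
  have := J.cux; have := J.cuy
  have hg : Continuous (gg α β ux uy) := by unfold gg; fun_prop
  rw [← intervalIntegral.integral_const_mul]
  refine intervalIntegral.integral_mono_on (by linarith [Real.pi_pos])
    (Continuous.intervalIntegrable (by fun_prop) _ _)
    (Continuous.intervalIntegrable (by fun_prop) _ _) ?_
  intro θ hθ
  have hcos := Real.cos_nonneg_of_mem_Icc hθ
  have e : (α + β) / β ^ 2 * (1 / 2 * β ^ 3 * cos θ * gg α β ux uy θ ^ 2) =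
    1 / 2 * β * (α + β) * cos θ * gg α β ux uy θ ^ 2 := by field_simp
  rw [e]
  have : α + β * cos θ ≤ α + β := by nlinarith [Real.cos_le_one θ]
  gcongr

lemma halfB (hα : 0 < α) (hβ : 0 < β) (J : Jet u ux uy uxx uxy uyy uxyy) (D : Dir α β u)
    (l w F : ℝ) (hl : 1 ≤ l) (hw : 0 ≤ w) (hw1 : w ≤ 1) (hF : 0 ≤ F) (hF1 : F ≤ 1)
    (cf : Continuous f) (hf : ∀ p, uxx p + uyy p = - f p - l ^ 2 * u p)
    (bu : ∫ p in DD α β α, u p ^ 2 ≤ w ^ 2) (bf : ∫ p in DD α β 0, f p ^ 2 ≤ F ^ 2)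
    (bx : ∫ p in DD α β 0, ux p ^ 2 ≤ (2 * l) ^ 2) (by' : ∫ p in DD α β 0, uy p ^ 2 ≤ (2 * l) ^ 2)
    (bxy : ∫ p in DD α β 0, uxy p ^ 2 ≤ (l ^ 2) ^ 2) :
    (∫ p in DD α β 0, ux p ^ 2) -
      1 / 2 * ∫ p in DD α β 0, (ux p ^ 2 + uy p ^ 2 - l ^ 2 * u p ^ 2) ≤
      ((α + β) / β ^ 2 * (3 + 4 * β + 4 * β ^ 2) + 2 * (α + β)) * (l ^ 2 * w + l * F) := by
  have := J.cu; have := J.cux; have := J.cuy; have := J.cuxx; have := J.cuxy; have := J.cuyy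
  have hD := DD_isCompact α β 0
  have hi : ∀ F : ℝ × ℝ → ℝ, Continuous F → Integrable F (volume.restrict (DD α β 0)) :=
    fun F hF => hF.continuousOn.integrableOn_compact hD
  have hb := DD_bounds (α := α) hβ 0
  have h1 := halfW hβ J D l w F hl hw hw1 hF hF1 cf hf bu (W_le hα _ cf _ bf)
    (W_le hα _ ‹_› _ bx) (W_le hα _ ‹_› _ by') (W_le hα _ ‹_› _ bxy)
  have h2 := arcB_le hα hβ J
  have h3 := identB hα hβ J D (l ^ 2)
  have t1 := cs_bound _ hD (fun p => p.1) ux f (by fun_prop) ‹_› ‹_› (α + β) (2 * l) F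
    (by linarith) hF (fun p hp => by rw [abs_of_nonneg (hb p hp).1]; exact (hb p hp).2.1)
    (by positivity) bx bf
  have e : ∫ p in DD α β 0, (ux p ^ 2 - 1 / 2 * (ux p ^ 2 + uy p ^ 2 - l ^ 2 * u p ^ 2) +
        p.1 * ux p * (uxx p + uyy p + l ^ 2 * u p)) =
      ∫ p in DD α β 0, (ux p ^ 2 - 1 / 2 * (ux p ^ 2 + uy p ^ 2 - l ^ 2 * u p ^ 2) -
        p.1 * ux p * f p) := by
    congr 1; ext p; rw [hf p]; ring
  rw [e, integral_sub, integral_sub, integral_const_mul] at h3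
  rotate_left
  · exact hi _ (by fun_prop)
  · exact hi _ (by fun_prop)
  · exact hi _ (by fun_prop)
  · exact hi _ (by fun_prop)
  rw [abs_le] at t1
  have h4 := mul_le_mul_of_nonneg_left h1 (show 0 ≤ (α + β) / β ^ 2 by positivity)
  have h5 : 0 ≤ (α + β) * (l ^ 2 * w) := by positivity
  have h6 : ((α + β) / β ^ 2 * (3 + 4 * β + 4 * β ^ 2) + 2 * (α + β)) * (l ^ 2 * w + l * F) =
    (α + β) / β ^ 2 * ((3 + 4 * β + 4 * β ^ 2) * (l ^ 2 * w + l * F)) +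
      2 * ((α + β) * (l ^ 2 * w)) + (α + β) * (2 * l) * F := by ring
  rw [h6]
  linarith [t1.2]

set_option maxHeartbeats 1600000 in
lemma main_quant (hα : 0 < α) (hβ : 0 < β) (J : Jet u ux uy uxx uxy uyy uxyy) (D : Dir α β u)
    (J' : Jet v vx vy vxx vxy vyy vxyy) (D' : Dir α β v)
    (l w F : ℝ) (hl : 1 ≤ l) (hw : 0 ≤ w) (hw1 : w ≤ 1) (hF : 0 ≤ F) (hF1 : F ≤ 1)
    (cf : Continuous f) (hf : ∀ p, uxx p + uyy p = - f p - l ^ 2 * u p)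
    (cfv : Continuous fv) (hfv : ∀ p, vxx p + vyy p = - fv p - l ^ 2 * v p)
    (s0 : ∀ y, v (0, y) = u (0, y)) (s1 : ∀ y, vx (0, y) = - ux (0, y))
    (s2 : ∀ y, vyy (0, y) = uyy (0, y))
    (h1 : (∫ p in DD α β 0, u p ^ 2) + ∫ p in DD α β 0, v p ^ 2 = 1)
    (hfF : (∫ p in DD α β 0, f p ^ 2) + ∫ p in DD α β 0, fv p ^ 2 = F ^ 2)
    (huw : (∫ p in DD α β α, u p ^ 2) + ∫ p in DD α β α, v p ^ 2 = w ^ 2) :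
    1 ≤ 4 * (α + β) ^ 2 * ((2 * ((α + β) / β ^ 2 * (3 + 4 * β + 4 * β ^ 2) + 2 * (α + β)) + 1)
      * (l ^ 2 * w + l * F)) := by
  have := J.cu; have := J.cux; have := J.cuy; have := J.cuxx; have := J.cuxy; have := J.cuyy
  have := J'.cu; have := J'.cux; have := J'.cuy; have := J'.cuxx; have := J'.cuxy
  have := J'.cuyy
  have hD := DD_isCompact α β 0
  have hi : ∀ F : ℝ × ℝ → ℝ, Continuous F → Integrable F (volume.restrict (DD α β 0)) :=
    fun F hF => hF.continuousOn.integrableOn_compact hD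
  have hb := DD_bounds (α := α) hβ 0
  have nn : ∀ (S : Set (ℝ × ℝ)) (G : ℝ × ℝ → ℝ), 0 ≤ ∫ p in S, G p ^ 2 :=
    fun S G => integral_nonneg (fun p => sq_nonneg _)
  have bu : ∫ p in DD α β 0, u p ^ 2 ≤ 1 ^ 2 := by linarith [nn (DD α β 0) v]
  have bv : ∫ p in DD α β 0, v p ^ 2 ≤ 1 ^ 2 := by linarith [nn (DD α β 0) u]
  have bf : ∫ p in DD α β 0, f p ^ 2 ≤ F ^ 2 := by linarith [nn (DD α β 0) fv]
  have bfv : ∫ p in DD α β 0, fv p ^ 2 ≤ F ^ 2 := by linarith [nn (DD α β 0) f]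
  have buw : ∫ p in DD α β α, u p ^ 2 ≤ w ^ 2 := by linarith [nn (DD α β α) v]
  have bvw : ∫ p in DD α β α, v p ^ 2 ≤ w ^ 2 := by linarith [nn (DD α β α) u]
  -- energy
  have eA : ∀ (u f ux uy uxx uyy : ℝ × ℝ → ℝ), Continuous u → Continuous f → Continuous ux →
      Continuous uy → (∀ p, uxx p + uyy p = - f p - l ^ 2 * u p) →
      ∫ p in DD α β 0, (ux p ^ 2 + uy p ^ 2 + u p * (uxx p + uyy p)) =
      (∫ p in DD α β 0, (ux p ^ 2 + uy p ^ 2 - l ^ 2 * u p ^ 2)) -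
        ∫ p in DD α β 0, 1 * u p * f p := by
    intro u f ux uy uxx uyy _ _ _ _ hf
    rw [← integral_sub (hi _ (by fun_prop)) (hi _ (by fun_prop))]
    congr 1; ext p; rw [hf p]; ring
  have iA := identA hα hβ J D
  have iA' := identA hα hβ J' D'
  rw [eA u f ux uy uxx uyy ‹_› ‹_› ‹_› ‹_› hf] at iA
  rw [eA v fv vx vy vxx vyy ‹_› ‹_› ‹_› ‹_› hfv] at iA'
  have c1 : ∫ y in (-β)..β, v (0, y) * vx (0, y) = - ∫ y in (-β)..β, u (0, y) * ux (0, y) := by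
    rw [← intervalIntegral.integral_neg]; congr 1; ext y; rw [s0, s1]; ring
  rw [c1] at iA'
  have eL : ∀ (u ux uy : ℝ × ℝ → ℝ), Continuous u → Continuous ux → Continuous uy →
      ∫ p in DD α β 0, (ux p ^ 2 + uy p ^ 2 - l ^ 2 * u p ^ 2) =
      (∫ p in DD α β 0, ux p ^ 2) + (∫ p in DD α β 0, uy p ^ 2) -
        l ^ 2 * ∫ p in DD α β 0, u p ^ 2 := by
    intro u ux uy _ _ _
    rw [← integral_const_mul, ← integral_add (hi _ (by fun_prop)) (hi _ (by fun_prop)),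
      ← integral_sub (hi _ (by fun_prop)) (hi _ (by fun_prop))]
  have eL1 := eL u ux uy ‹_› ‹_› ‹_›
  have eL2 := eL v vx vy ‹_› ‹_› ‹_›
  have tf := cs_bound _ hD (fun _ => 1) u f (by fun_prop) ‹_› ‹_› 1 1 F (by norm_num) hF
    (fun p _ => by simp) (by norm_num) bu bf
  have tfv := cs_bound _ hD (fun _ => 1) v fv (by fun_prop) ‹_› ‹_› 1 1 F (by norm_num) hF
    (fun p _ => by simp) (by norm_num) bv bfv
  rw [abs_le] at tf tfv
  have hl2 : 1 ≤ l ^ 2 := by nlinarith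
  have hL1 : l ^ 2 * (∫ p in DD α β 0, u p ^ 2) + l ^ 2 * (∫ p in DD α β 0, v p ^ 2) = l ^ 2 := by
    rw [← mul_add, h1, mul_one]
  have nx := nn (DD α β 0) ux
  have ny := nn (DD α β 0) uy
  have nvx := nn (DD α β 0) vx
  have nvy := nn (DD α β 0) vy
  have e4 : (2 * l) ^ 2 = 4 * l ^ 2 := by ring
  have bx : ∫ p in DD α β 0, ux p ^ 2 ≤ (2 * l) ^ 2 := by
    rw [e4]; linarith [tf.2, tfv.2]
  have by1 : ∫ p in DD α β 0, uy p ^ 2 ≤ (2 * l) ^ 2 := by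
    rw [e4]; linarith [tf.2, tfv.2]
  have bvx : ∫ p in DD α β 0, vx p ^ 2 ≤ (2 * l) ^ 2 := by
    rw [e4]; linarith [tf.2, tfv.2]
  have bvy : ∫ p in DD α β 0, vy p ^ 2 ≤ (2 * l) ^ 2 := by
    rw [e4]; linarith [tf.2, tfv.2]
  -- second derivatives
  have eF : ∀ (u f uxx uxy uyy : ℝ × ℝ → ℝ), Continuous u → Continuous f → Continuous uxx →
      Continuous uxy → Continuous uyy → (∀ p, uxx p + uyy p = - f p - l ^ 2 * u p) →
      (∫ p in DD α β 0, (uxx p * uyy p - uxy p ^ 2)) ≤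
      1 / 2 * (∫ p in DD α β 0, f p ^ 2) + 1 / 2 * l ^ 4 * (∫ p in DD α β 0, u p ^ 2) -
        ∫ p in DD α β 0, uxy p ^ 2 := by
    intro u f uxx uxy uyy _ _ _ _ _ hf
    rw [← integral_const_mul, ← integral_const_mul,
      ← integral_add (hi _ (by fun_prop)) (hi _ (by fun_prop)),
      ← integral_sub (hi _ (by fun_prop)) (hi _ (by fun_prop))]
    refine integral_mono (hi _ (by fun_prop)) (hi _ (by fun_prop)) ?_
    intro p
    have h1 := sq_nonneg (uxx p - uyy p)
    have h2 := sq_nonneg (f p - l ^ 2 * u p)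
    have h3 : (uxx p + uyy p) ^ 2 = (- f p - l ^ 2 * u p) ^ 2 := by rw [hf p]
    simp only
    nlinarith
  have iF := identF hα hβ J D
  have iF' := identF hα hβ J' D'
  have c2 : ∫ y in (-β)..β, vx (0, y) * vyy (0, y) =
      - ∫ y in (-β)..β, ux (0, y) * uyy (0, y) := by
    rw [← intervalIntegral.integral_neg]; congr 1; ext y; rw [s2, s1]; ring
  rw [c2] at iF'
  have eF1 := eF u f uxx uxy uyy ‹_› ‹_› ‹_› ‹_› ‹_› hf
  have eF2 := eF v fv vxx vxy vyy ‹_› ‹_› ‹_› ‹_› ‹_› hfv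
  have hL2 : l ^ 4 * (∫ p in DD α β 0, u p ^ 2) + l ^ 4 * (∫ p in DD α β 0, v p ^ 2) = l ^ 4 := by
    rw [← mul_add, h1, mul_one]
  have nxy := nn (DD α β 0) uxy
  have nvxy := nn (DD α β 0) vxy
  have hl4 : 1 ≤ l ^ 4 := one_le_pow₀ hl
  have hF2 : F ^ 2 ≤ 1 := by nlinarith
  have bxy : ∫ p in DD α β 0, uxy p ^ 2 ≤ (l ^ 2) ^ 2 := by
    rw [show (l ^ 2) ^ 2 = l ^ 4 by ring]; linarith
  have bvxy : ∫ p in DD α β 0, vxy p ^ 2 ≤ (l ^ 2) ^ 2 := by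
    rw [show (l ^ 2) ^ 2 = l ^ 4 by ring]; linarith
  -- Rellich
  have r1 := halfB hα hβ J D l w F hl hw hw1 hF hF1 cf hf buw bf bx by1 bxy
  have r2 := halfB hα hβ J' D' l w F hl hw hw1 hF hF1 cfv hfv bvw bfv bvx bvy bvxy
  have hlF : F ≤ l * F := by nlinarith
  have hlw : 0 ≤ l ^ 2 * w := by positivity
  -- Poincare
  have eG : ∀ (u ux : ℝ × ℝ → ℝ), Continuous u → Continuous ux →
      ∫ p in DD α β 0, (u p ^ 2 + 2 * (p.1 * u p * ux p)) = 0 →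
      (∫ p in DD α β 0, u p ^ 2) ≤ 4 * (α + β) ^ 2 * ∫ p in DD α β 0, ux p ^ 2 := by
    intro u ux _ _ h
    have : ∫ p in DD α β 0, (1 / 2 * u p ^ 2 - 2 * (α + β) ^ 2 * ux p ^ 2) ≤
        ∫ p in DD α β 0, (u p ^ 2 + 2 * (p.1 * u p * ux p)) := by
      refine setIntegral_mono_on (hi _ (by fun_prop)) (hi _ (by fun_prop)) hD.measurableSet ?_
      intro p hp
      have h1 := sq_nonneg (u p + 2 * (p.1 * ux p))
      have h2 : p.1 ^ 2 ≤ (α + β) ^ 2 := pow_le_pow_left₀ (hb p hp).1 (hb p hp).2.1 2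
      have h3 := mul_le_mul_of_nonneg_right h2 (sq_nonneg (ux p))
      nlinarith
    rw [h, integral_sub (hi _ (by fun_prop)) (hi _ (by fun_prop)), integral_const_mul,
      integral_const_mul] at this
    linarith
  have g1 := eG u ux ‹_› ‹_› (identG hα hβ J D)
  have g2 := eG v vx ‹_› ‹_› (identG hα hβ J' D')
  have hX : (∫ p in DD α β 0, ux p ^ 2) + (∫ p in DD α β 0, vx p ^ 2) ≤
      (2 * ((α + β) / β ^ 2 * (3 + 4 * β + 4 * β ^ 2) + 2 * (α + β)) + 1)
      * (l ^ 2 * w + l * F) := by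
    generalize ((α + β) / β ^ 2 * (3 + 4 * β + 4 * β ^ 2) + 2 * (α + β)) = K at r1 r2 ⊢
    linarith
  have := mul_le_mul_of_nonneg_left hX (show 0 ≤ 4 * (α + β) ^ 2 by positivity)
  linarith
end

section
open scoped ContDiff

lemma pdx_eq (u : ℝ × ℝ → ℝ) (p : ℝ × ℝ) (hu : DifferentiableAt ℝ u p) :
    HasDerivAt (fun t => u (t, p.2)) (fderiv ℝ u p (1, 0)) p.1 :=
  hu.hasFDerivAt.comp_hasDerivAt p.1 ((hasDerivAt_id p.1).prodMk (hasDerivAt_const _ p.2))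

lemma pdy_eq (u : ℝ × ℝ → ℝ) (p : ℝ × ℝ) (hu : DifferentiableAt ℝ u p) :
    HasDerivAt (fun t => u (p.1, t)) (fderiv ℝ u p (0, 1)) p.2 :=
  hu.hasFDerivAt.comp_hasDerivAt p.2 ((hasDerivAt_const _ p.1).prodMk (hasDerivAt_id p.2))

lemma pdx_fun (u : ℝ × ℝ → ℝ) (hu : ContDiff ℝ ∞ u) :
    pdx u = fun p => fderiv ℝ u p (1, 0) := by
  ext p; exact (pdx_eq u p (hu.differentiable (by simp) p)).deriv

lemma pdy_fun (u : ℝ × ℝ → ℝ) (hu : ContDiff ℝ ∞ u) :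
    pdy u = fun p => fderiv ℝ u p (0, 1) := by
  ext p; exact (pdy_eq u p (hu.differentiable (by simp) p)).deriv

lemma pdx_smooth (u : ℝ × ℝ → ℝ) (hu : ContDiff ℝ ∞ u) : ContDiff ℝ ∞ (pdx u) := by
  rw [pdx_fun u hu]
  exact (hu.fderiv_right (m := ∞) (by simp)).clm_apply contDiff_const

lemma pdy_smooth (u : ℝ × ℝ → ℝ) (hu : ContDiff ℝ ∞ u) : ContDiff ℝ ∞ (pdy u) := by
  rw [pdy_fun u hu]
  exact (hu.fderiv_right (m := ∞) (by simp)).clm_apply contDiff_const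

lemma pdx_has (u : ℝ × ℝ → ℝ) (hu : ContDiff ℝ ∞ u) (x y : ℝ) :
    HasDerivAt (fun t => u (t, y)) (pdx u (x, y)) x := by
  rw [pdx_fun u hu]; exact pdx_eq u (x, y) (hu.differentiable (by simp) _)

lemma pdy_has (u : ℝ × ℝ → ℝ) (hu : ContDiff ℝ ∞ u) (x y : ℝ) :
    HasDerivAt (fun t => u (x, t)) (pdy u (x, y)) y := by
  rw [pdy_fun u hu]; exact pdy_eq u (x, y) (hu.differentiable (by simp) _)

lemma pd_comm (u : ℝ × ℝ → ℝ) (hu : ContDiff ℝ ∞ u) : pdx (pdy u) = pdy (pdx u) := by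
  rw [pdx_fun _ (pdy_smooth u hu), pdy_fun _ (pdx_smooth u hu), pdx_fun u hu, pdy_fun u hu]
  ext p
  have hd : DifferentiableAt ℝ (fderiv ℝ u) p :=
    (hu.fderiv_right (m := ∞) (by simp)).differentiable (by simp) p
  rw [fderiv_clm_apply hd (by fun_prop), fderiv_clm_apply hd (by fun_prop)]
  have hs : IsSymmSndFDerivAt ℝ u p := hu.contDiffAt.isSymmSndFDerivAt (by
    simp only [minSmoothness_of_isRCLikeNormedField]
    exact WithTop.coe_le_coe.2 (le_top : (2 : ℕ∞) ≤ ⊤))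
  simpa using hs.eq (1, 0) (0, 1)

lemma jet_of_smooth (u : ℝ × ℝ → ℝ) (hu : ContDiff ℝ ∞ u) :
    Jet u (pdx u) (pdy u) (pdx (pdx u)) (pdy (pdx u)) (pdy (pdy u)) (pdx (pdy (pdy u))) := by
  have hx := pdx_smooth u hu
  have hy := pdy_smooth u hu
  have hxx := pdx_smooth _ hx
  have hxy := pdy_smooth _ hx
  have hyy := pdy_smooth _ hy
  have hxyy := pdx_smooth _ hyy
  refine ⟨hu.differentiable (by simp), hx.differentiable (by simp), hy.differentiable (by simp),
    hu.continuous, hx.continuous, hy.continuous, hxx.continuous, hxy.continuous, hyy.continuous,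
    hxyy.continuous, pdx_has u hu, pdy_has u hu, pdx_has _ hx, pdy_has _ hx, ?_, pdy_has _ hy,
    pdx_has _ hyy, ?_⟩
  · rw [← pd_comm u hu]; exact pdx_has _ hy
  · rw [pd_comm _ hy, pd_comm u hu]; exact pdy_has _ hxy

/-- reflection -/
def rf (p : ℝ × ℝ) : ℝ × ℝ := (-p.1, p.2)

lemma rf_cont : Continuous rf := by unfold rf; fun_prop
lemma rf_diff : Differentiable ℝ rf := by unfold rf; fun_prop

lemma dneg (G : ℝ × ℝ → ℝ) (g : ℝ) (x y : ℝ)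
    (h : HasDerivAt (fun t => G (t, y)) g (-x)) :
    HasDerivAt (fun t => G (rf (t, y))) (-g) x := by
  have := HasDerivAt.scomp x h (hasDerivAt_neg x)
  simpa [rf, Function.comp_def] using this

lemma jet_reflect {u ux uy uxx uxy uyy uxyy : ℝ × ℝ → ℝ} (J : Jet u ux uy uxx uxy uyy uxyy) :
    Jet (fun p => u (rf p)) (fun p => - ux (rf p)) (fun p => uy (rf p)) (fun p => uxx (rf p))
      (fun p => - uxy (rf p)) (fun p => uyy (rf p)) (fun p => - uxyy (rf p)) := by
  refine ⟨J.du.comp rf_diff, (J.dux.comp rf_diff).neg, J.duy.comp rf_diff, J.cu.comp rf_cont,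
    (J.cux.comp rf_cont).neg, J.cuy.comp rf_cont, J.cuxx.comp rf_cont, (J.cuxy.comp rf_cont).neg,
    J.cuyy.comp rf_cont, (J.cuxyy.comp rf_cont).neg, ?_, ?_, ?_, ?_, ?_, ?_, ?_, ?_⟩
  · exact fun x y => dneg _ _ _ _ (J.hx (-x) y)
  · exact fun x y => J.hy (-x) y
  · exact fun x y => (dneg _ _ _ _ (J.hxx (-x) y)).neg.congr_deriv (neg_neg _)
  · exact fun x y => (J.hxy (-x) y).neg
  · exact fun x y => dneg _ _ _ _ (J.hyx (-x) y)
  · exact fun x y => J.hyy (-x) y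
  · exact fun x y => dneg _ _ _ _ (J.hyyx (-x) y)
  · exact fun x y => (J.hxyy (-x) y).neg

lemma rf_mp : MeasurePreserving rf volume volume := by
  have h : MeasurePreserving (fun x : ℝ => -x) volume volume := Measure.measurePreserving_neg _
  exact h.prod (MeasurePreserving.id (volume : Measure ℝ))

lemma rf_rf (p : ℝ × ℝ) : rf (rf p) = p := by simp [rf]

lemma rf_emb : MeasurableEmbedding rf :=
  (MeasurableEquiv.mk ⟨rf, rf, rf_rf, rf_rf⟩ rf_cont.measurable
    rf_cont.measurable).measurableEmbedding

lemma split_int (c α β : ℝ) (hc : 0 ≤ c) (S : Set (ℝ × ℝ)) 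
    (hS : S = DD α β c ∪ rf ⁻¹' DD α β c) (F : ℝ × ℝ → ℝ) (hF : Continuous F) :
    ∫ p in S, F p = (∫ p in DD α β c, F p) + ∫ p in DD α β c, F (rf p) := by
  have hD := DD_isCompact α β c
  have hcomp : rf ⁻¹' DD α β c = rf '' DD α β c := by
    ext p
    constructor
    · intro h; exact ⟨rf p, h, rf_rf p⟩
    · rintro ⟨q, hq, rfl⟩; simpa [rf_rf] using hq
  have hD' : IsCompact (rf ⁻¹' DD α β c) := by rw [hcomp]; exact hD.image rf_cont
  have e : ∫ p in rf ⁻¹' DD α β c, F p = ∫ p in DD α β c, F (rf p) := by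
    rw [← rf_mp.setIntegral_preimage_emb rf_emb (fun p => F (rf p)) (DD α β c)]
    simp only [rf_rf]
  rw [hS, ← e]
  refine setIntegral_union₀ ?_ hD'.measurableSet.nullMeasurableSet
    (hF.continuousOn.integrableOn_compact hD) (hF.continuousOn.integrableOn_compact hD')
  refine measure_mono_null (t := ({0} : Set ℝ) ×ˢ (univ : Set ℝ)) ?_ ?_
  · rintro ⟨x, y⟩ ⟨h1, h2⟩
    have h3 : c ≤ x := h1.1
    have h4 : c ≤ -x := h2.1
    simp only [mem_prod, mem_singleton_iff, mem_univ, and_true]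
    linarith
  · rw [Measure.volume_eq_prod, Measure.prod_prod]; simp

lemma wings_eq (α β : ℝ) (hβ : 0 < β) :
    Wings α β = DD α β α ∪ rf ⁻¹' DD α β α := by
  ext ⟨x, y⟩
  simp only [Wings, mem_union, mem_preimage, rf, DD_mem_iff α β α hβ]
  have key : ∀ z : ℝ, (α ≤ z ∧ (max (z - α) 0) ^ 2 + y ^ 2 ≤ β ^ 2) ↔
      ((z - α) ^ 2 + y ^ 2 ≤ β ^ 2 ∧ α ≤ z) := by
    intro z
    constructor
    · rintro ⟨h1, h2⟩; rw [max_eq_left (by linarith)] at h2; exact ⟨h2, h1⟩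
    · rintro ⟨h1, h2⟩; rw [max_eq_left (by linarith)]; exact ⟨h2, h1⟩
  rw [key, key]
  refine or_congr Iff.rfl ?_
  change ((x + α) ^ 2 + y ^ 2 ≤ β ^ 2 ∧ x ≤ -α) ↔ _
  rw [show (-x - α) ^ 2 = (x + α) ^ 2 by ring]
  exact and_congr Iff.rfl ⟨fun h => by linarith, fun h => by linarith⟩

lemma stadium_eq (α β : ℝ) (hα : 0 < α) (hβ : 0 < β) :
    Stadium α β = DD α β 0 ∪ rf ⁻¹' DD α β 0 := by
  have hm : ∀ z y : ℝ, (z, y) ∈ DD α β 0 ↔ (0 ≤ z ∧ z ≤ α ∧ -β ≤ y ∧ y ≤ β) ∨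
      (z, y) ∈ DD α β α := by
    intro z y
    rw [DD_mem_iff α β 0 hβ, DD_mem_iff α β α hβ]
    constructor
    · rintro ⟨h1, h2⟩
      rcases le_total z α with h | h
      · left
        have := abs_le.1 (abs_le_of_sq_le_sq
          (show y ^ 2 ≤ β ^ 2 by nlinarith [sq_nonneg (max (z - α) 0)]) hβ.le)
        exact ⟨h1, h, this⟩
      · exact Or.inr ⟨h, h2⟩
    · rintro (⟨h1, h2, h3, h4⟩ | ⟨h1, h2⟩)
      · refine ⟨h1, ?_⟩
        rw [max_eq_right (by linarith)]; nlinarith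
      · exact ⟨by linarith, h2⟩
  ext ⟨x, y⟩
  rw [Stadium, wings_eq α β hβ]
  simp only [mem_union, mem_preimage, rf, hm, Rect, mem_prod, mem_Icc]
  constructor
  · rintro (⟨⟨h1, h2⟩, h3⟩ | h | h)
    · rcases le_total 0 x with h | h
      · exact Or.inl (Or.inl ⟨h, h2, h3⟩)
      · exact Or.inr (Or.inl ⟨by linarith, by linarith, h3⟩)
    · exact Or.inl (Or.inr h)
    · exact Or.inr (Or.inr h)
  · rintro ((⟨h1, h2, h3⟩ | h) | (⟨h1, h2, h3⟩ | h))
    · exact Or.inl ⟨⟨by linarith, h2⟩, h3⟩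
    · exact Or.inr (Or.inl h)
    · exact Or.inl ⟨⟨by linarith, by linarith⟩, h3⟩
    · exact Or.inr (Or.inr h)

lemma stadium_compact (α β : ℝ) (hα : 0 < α) (hβ : 0 < β) : IsCompact (Stadium α β) := by
  rw [stadium_eq α β hα hβ]
  have hcomp : rf ⁻¹' DD α β 0 = rf '' DD α β 0 := by
    ext p
    constructor
    · intro h; exact ⟨rf p, h, rf_rf p⟩
    · rintro ⟨q, hq, rfl⟩; simpa [rf_rf] using hq
  rw [hcomp]
  exact (DD_isCompact α β 0).union ((DD_isCompact α β 0).image rf_cont)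

lemma extend_smooth (S V : Set (ℝ × ℝ)) (hS : IsCompact S) (hV : IsOpen V) (hSV : S ⊆ V)
    (u : ℝ × ℝ → ℝ) (hu : ContDiffOn ℝ ∞ u V) :
    ∃ U : ℝ × ℝ → ℝ, ContDiff ℝ ∞ U ∧ ∀ p ∈ S, U =ᶠ[nhds p] u := by
  obtain ⟨K, hK, hSK, hKV⟩ := exists_compact_between hS hV hSV
  obtain ⟨χ, h1, h0, -⟩ := exists_contMDiffMap_one_nhds_of_subset_interior
    (modelWithCornersSelf ℝ (ℝ × ℝ)) (n := (⊤ : ℕ∞)) (s := S) (t := K) hS.isClosed hSK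
  have hχ : ContDiff ℝ ∞ (χ : ℝ × ℝ → ℝ) := contMDiff_iff_contDiff.1 χ.contMDiff
  refine ⟨fun p => χ p * u p, ?_, ?_⟩
  · rw [contDiff_iff_contDiffAt]
    intro p
    by_cases hp : p ∈ V
    · exact hχ.contDiffAt.mul (hu.contDiffAt (hV.mem_nhds hp))
    · have : (fun p => χ p * u p) =ᶠ[nhds p] fun _ => (0 : ℝ) := by
        have hn : Kᶜ ∈ nhds p := hK.isClosed.isOpen_compl.mem_nhds (fun h => hp (hKV h))
        filter_upwards [hn] with q hq
        rw [h0 q hq, zero_mul]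
      exact contDiffAt_const.congr_of_eventuallyEq this
  · intro p hp
    have := (eventually_nhdsSet_iff_forall.1 h1) p hp
    filter_upwards [this] with q hq
    rw [hq, one_mul]

lemma pdx_congr (u v : ℝ × ℝ → ℝ) (p : ℝ × ℝ) (h : u =ᶠ[nhds p] v) : pdx u p = pdx v p := by
  refine Filter.EventuallyEq.deriv_eq ?_
  have : Tendsto (fun t : ℝ => (t, p.2)) (nhds p.1) (nhds p) :=
    (show Continuous (fun t : ℝ => (t, p.2)) by fun_prop).tendsto p.1
  exact this.eventually h

lemma pdy_congr (u v : ℝ × ℝ → ℝ) (p : ℝ × ℝ) (h : u =ᶠ[nhds p] v) : pdy u p = pdy v p := by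
  refine Filter.EventuallyEq.deriv_eq ?_
  have : Tendsto (fun t : ℝ => (p.1, t)) (nhds p.2) (nhds p) :=
    (show Continuous (fun t : ℝ => (p.1, t)) by fun_prop).tendsto p.2
  exact this.eventually h

lemma lap_congr (u v : ℝ × ℝ → ℝ) (p : ℝ × ℝ) (h : u =ᶠ[nhds p] v) : lap u p = lap v p := by
  unfold lap
  have h1 := h.eventuallyEq_nhds
  rw [pdx_congr _ _ p (h1.mono fun q hq => pdx_congr _ _ q hq),
    pdy_congr _ _ p (h1.mono fun q hq => pdy_congr _ _ q hq)]
end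

section
open scoped ContDiff

def KK (α β : ℝ) : ℝ :=
  4 * (α + β) ^ 2 * (2 * ((α + β) / β ^ 2 * (3 + 4 * β + 4 * β ^ 2) + 2 * (α + β)) + 1)

lemma KK_pos (α β : ℝ) (hα : 0 < α) (hβ : 0 < β) : 0 < KK α β := by unfold KK; positivity

lemma bdry_sub (α β : ℝ) (hβ : 0 < β) : StadiumBoundary α β ⊆ Stadium α β := by
  intro ⟨x, y⟩ h
  rcases h with ⟨h1, h2⟩ | ⟨h1, h2⟩
  · simp only at h1 h2
    refine Or.inl ⟨abs_le.1 h1, ?_⟩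
    rcases h2 with h | h <;> constructor <;> simp only <;> linarith
  · simp only at h1 h2
    rcases abs_cases x with ⟨h3, h4⟩ | ⟨h3, h4⟩
    · rw [h3] at h1 h2
      exact Or.inr (Or.inl ⟨h1.le, h2⟩)
    · rw [h3] at h1 h2
      refine Or.inr (Or.inr ⟨?_, ?_⟩)
      · simp only; nlinarith
      · simp only; linarith

lemma datum_quant (α β : ℝ) (hα : 0 < α) (hβ : 0 < β) (d : QMDatum α β)
    (h1 : (∫ p in Stadium α β, (d.u p) ^ 2) = 1) (hl : 1 ≤ d.lam)
    (hF1 : Real.sqrt (∫ p in Stadium α β, (d.f p) ^ 2) ≤ 1) :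
    1 ≤ KK α β * (d.lam ^ 2 * Real.sqrt (∫ p in Wings α β, (d.u p) ^ 2) +
      d.lam * Real.sqrt (∫ p in Stadium α β, (d.f p) ^ 2)) := by
  have hSc := stadium_compact α β hα hβ
  have hSm : MeasurableSet (Stadium α β) := hSc.measurableSet
  obtain ⟨V, hV, hSV, hu⟩ := d.smooth
  obtain ⟨U, hU, hUe⟩ := extend_smooth _ V hSc hV hSV d.u hu
  have hUu : ∀ p ∈ Stadium α β, U p = d.u p := fun p hp => (hUe p hp).eq_of_nhds
  have hlap : ∀ p ∈ Stadium α β, lap U p - d.lam ^ 2 * U p = d.f p := fun p hp => by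
    rw [lap_congr U d.u p (hUe p hp), hUu p hp]; exact d.eqn p hp
  have hUb : ∀ p ∈ StadiumBoundary α β, U p = 0 := fun p hp => by
    rw [hUu p (bdry_sub α β hβ hp)]; exact d.dirichlet p hp
  have J := jet_of_smooth U hU
  have J' := jet_reflect J
  have D : Dir α β U := by
    refine ⟨fun x hx => ⟨hUb _ (Or.inl ⟨?_, Or.inl rfl⟩), hUb _ (Or.inl ⟨?_, Or.inr rfl⟩)⟩,
      fun θ hθ => hUb _ (Or.inr ?_)⟩
    · exact abs_le.2 ⟨by simp only; linarith [hx.1], hx.2.le⟩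
    · exact abs_le.2 ⟨by simp only; linarith [hx.1], hx.2.le⟩
    · have hc := Real.cos_nonneg_of_mem_Icc hθ
      have h0 : 0 ≤ β * cos θ := by positivity
      have : |α + β * cos θ| = α + β * cos θ := abs_of_nonneg (by linarith)
      refine ⟨?_, ?_⟩
      · simp only [this]
        linear_combination β ^ 2 * Real.sin_sq_add_cos_sq θ
      · simp only [this]; linarith
  have D' : Dir α β (fun p => U (rf p)) := by
    refine ⟨fun x hx => ⟨hUb _ (Or.inl ⟨?_, Or.inl rfl⟩), hUb _ (Or.inl ⟨?_, Or.inr rfl⟩)⟩,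
      fun θ hθ => hUb _ (Or.inr ?_)⟩
    · simp only [rf, abs_neg]
      exact abs_le.2 ⟨by linarith [hx.1], hx.2.le⟩
    · simp only [rf, abs_neg]
      exact abs_le.2 ⟨by linarith [hx.1], hx.2.le⟩
    · have hc := Real.cos_nonneg_of_mem_Icc hθ
      have h0 : 0 ≤ β * cos θ := by positivity
      have : |α + β * cos θ| = α + β * cos θ := abs_of_nonneg (by linarith)
      refine ⟨?_, ?_⟩
      · simp only [rf, abs_neg, this]
        linear_combination β ^ 2 * Real.sin_sq_add_cos_sq θ
      · simp only [rf, abs_neg, this]; linarith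
  set f : ℝ × ℝ → ℝ := fun p => lap U p - d.lam ^ 2 * U p with hfdef
  have cf : Continuous f := by
    have := J.cu; have := J.cuxx; have := J.cuyy
    simp only [hfdef]
    unfold lap
    fun_prop
  have hf : ∀ p, pdx (pdx U) p + pdy (pdy U) p = - f p - d.lam ^ 2 * U p := by
    intro p; simp only [hfdef]; unfold lap; ring
  have iu : (∫ p in Stadium α β, U p ^ 2) = 1 := by
    rw [← h1]; exact setIntegral_congr_fun hSm (fun p hp => by simp only [hUu p hp])
  have jf : (∫ p in Stadium α β, f p ^ 2) = ∫ p in Stadium α β, d.f p ^ 2 :=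
    setIntegral_congr_fun hSm (fun p hp => by simp only [hfdef, hlap p hp])
  have hWm : MeasurableSet (Wings α β) := by
    rw [wings_eq α β hβ]
    exact (DD_isCompact α β α).measurableSet.union
      (rf_cont.measurable (DD_isCompact α β α).measurableSet)
  have hWS : Wings α β ⊆ Stadium α β := subset_union_right
  have iw : (∫ p in Wings α β, U p ^ 2) = ∫ p in Wings α β, d.u p ^ 2 :=
    setIntegral_congr_fun hWm (fun p hp => by simp only [hUu p (hWS hp)])
  have cU2 : Continuous (fun p => U p ^ 2) := J.cu.pow 2
  have hw1 : (∫ p in Wings α β, U p ^ 2) ≤ 1 := by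
    rw [← iu]
    refine setIntegral_mono_set (cU2.continuousOn.integrableOn_compact hSc) ?_ hWS.eventuallyLE
    filter_upwards with p using sq_nonneg _
  rw [← jf] at hF1 ⊢
  rw [← iw]
  have nnW : 0 ≤ ∫ p in Wings α β, U p ^ 2 := integral_nonneg (fun p => sq_nonneg _)
  have nnF : 0 ≤ ∫ p in Stadium α β, f p ^ 2 := integral_nonneg (fun p => sq_nonneg _)
  have e1 := split_int 0 α β le_rfl _ (stadium_eq α β hα hβ) _ cU2
  have e2 := split_int 0 α β le_rfl _ (stadium_eq α β hα hβ) _ (cf.pow 2)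
  have e3 := split_int α α β hα.le _ (wings_eq α β hβ) _ cU2
  have := main_quant hα hβ J D J' D' d.lam (Real.sqrt (∫ p in Wings α β, U p ^ 2))
    (Real.sqrt (∫ p in Stadium α β, f p ^ 2)) hl (Real.sqrt_nonneg _)
    (Real.sqrt_le_one.2 hw1) (Real.sqrt_nonneg _) hF1 cf hf (fv := fun p => f (rf p))
    (cf.comp rf_cont) (fun p => hf (rf p)) (fun y => by simp [rf]) (fun y => by simp [rf])
    (fun y => by simp [rf]) (by rw [← e1, iu]) (by rw [Real.sq_sqrt nnF]; exact e2.symm)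
    (by rw [Real.sq_sqrt nnW, e3])
  refine this.trans (le_of_eq ?_)
  unfold KK
  ring
end

/-- There is `C > 0` depending only on `α, β` such that for every sequence of
real Dirichlet quasimode data with `‖u_k‖_{L²(S)} = 1`, `λ_k → ∞` and
`λ_k² ‖f_k‖_{L²(S)} → 0` (an `o(λ⁻²)` quasimode, e.g. eigenfunctions), one has
`‖u_k‖_{L²(W)} ≥ C λ_k⁻²` for all large `k`. -/
theorem stmt5 (α β : ℝ) (hα : 0 < α) (hβ : 0 < β) :
    ∃ C > 0, ∀ d : ℕ → QMDatum α β,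
      (∀ k, (∫ p in Stadium α β, ((d k).u p) ^ 2) = 1) →
      Tendsto (fun k => (d k).lam) atTop atTop →
      Tendsto (fun k => (d k).lam ^ 2 *
        Real.sqrt (∫ p in Stadium α β, ((d k).f p) ^ 2)) atTop (nhds 0) →
      ∀ᶠ k in atTop,
        Real.sqrt (∫ p in Wings α β, ((d k).u p) ^ 2) ≥ C / (d k).lam ^ 2 := by
  have hK := KK_pos α β hα hβ
  refine ⟨1 / (2 * KK α β), by positivity, ?_⟩
  intro d hu hl hf
  have hpos : (0 : ℝ) < 1 / (2 * KK α β) := by positivity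
  filter_upwards [hl.eventually_ge_atTop 1, hf.eventually_lt_const one_pos,
    hf.eventually_lt_const hpos] with k k1 k2 k3
  have hF0 := Real.sqrt_nonneg (∫ p in Stadium α β, ((d k).f p) ^ 2)
  have hq := datum_quant α β hα hβ (d k) (hu k) k1
  set F := Real.sqrt (∫ p in Stadium α β, ((d k).f p) ^ 2) with hFdef
  set w := Real.sqrt (∫ p in Wings α β, ((d k).u p) ^ 2) with hwdef
  set l := (d k).lam with hldef
  have hl1 : l ≤ l ^ 2 := by nlinarith
  have hl2 : 1 ≤ l ^ 2 := by linarith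
  have hlF : l * F ≤ l ^ 2 * F := mul_le_mul_of_nonneg_right hl1 hF0
  have hF1 : F ≤ 1 := by nlinarith
  have h := hq hF1
  have h2 : 1 / KK α β ≤ l ^ 2 * w + l * F := by
    rw [div_le_iff₀ hK]; linarith
  have h3 : 1 / KK α β = 1 / (2 * KK α β) + 1 / (2 * KK α β) := by field_simp; norm_num
  rw [ge_iff_le, div_le_iff₀ (by linarith)]
  linarith
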